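/- arXiv:2107.02231 — 4 statements merged into one kernel-verified Lean document; each statement's English description precedes it below -/
import Mathlib

section
/- Let X be an ACM set of distinct points in P^m × P^n with s_1 = |X_1| and s_2 = |X_2|. If s_1 = 1 then HF_{ϑ_X}(i,j) = HF_{ϑ_{X_2}}(j) for all (i,j) ∈ N^2; and if s_2 = 1 then HF_{ϑ_X}(i,j) = HF_{ϑ_{X_1}}(i) for all (i,j) ∈ N^2. -/
/- Common setup: finite sets of points in the multiprojective space
   `P^m x P^n` over a field `K` of characteristic zero, their bihomogeneous
   vanishing ideals, bigraded Hilbert functions, Kähler differents,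
   separators, Cayley-Bacharach property and complete intersections. -/

open MvPolynomial

set_option maxHeartbeats 1000000
set_option synthInstance.maxHeartbeats 400000

noncomputable section

namespace MultiProjPoints

variable (K : Type) [Field K] [CharZero K] [DecidableEq K]

/-- The bigraded coordinate ring `S = K[X_0,…,X_m,Y_0,…,Y_n]` of `P^m × P^n`. -/
abbrev BiRing (m n : ℕ) : Type := MvPolynomial (Fin (m+1) ⊕ Fin (n+1)) K

/-- The weights giving the bigrading: `deg X_i = (1,0)`, `deg Y_j = (0,1)`. -/
def biwt (m n : ℕ) : (Fin (m+1) ⊕ Fin (n+1)) → ℤ × ℤ :=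
  Sum.elim (fun _ => ((1 : ℤ), (0 : ℤ))) (fun _ => ((0 : ℤ), (1 : ℤ)))

variable {m n : ℕ}

/-- A (representative of a) point of `P^m × P^n`. -/
abbrev BiPt (m n : ℕ) : Type := (Fin (m+1) → K) × (Fin (n+1) → K)

/-- `F` is bihomogeneous of degree `d`. -/
def IsBihom (F : BiRing K m n) (d : ℤ × ℤ) : Prop :=
  IsWeightedHomogeneous (biwt m n) F d

/-- Evaluation of a polynomial at (a representative of) a point. -/
def evalB (p : BiPt K m n) (F : BiRing K m n) : K :=
  eval (Sum.elim p.1 p.2) F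

/-- A finset of representatives is a good configuration of points of
`P^m × P^n`: all representatives are nonzero, and proportional
representatives coincide (so distinct elements are distinct projective
points, and images under the two projections behave correctly). -/
def GoodConfig (𝕏 : Finset (BiPt K m n)) : Prop :=
  (∀ p ∈ 𝕏, p.1 ≠ 0 ∧ p.2 ≠ 0) ∧
  (∀ p ∈ 𝕏, ∀ q ∈ 𝕏, (∃ c : K, c ≠ 0 ∧ p.1 = c • q.1) → p.1 = q.1) ∧
  (∀ p ∈ 𝕏, ∀ q ∈ 𝕏, (∃ c : K, c ≠ 0 ∧ p.2 = c • q.2) → p.2 = q.2)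

/-- The bihomogeneous vanishing ideal `I_𝕏` of a set of points. -/
def vIdealB (𝕏 : Finset (BiPt K m n)) : Ideal (BiRing K m n) :=
  Ideal.span {F | (∃ d, IsBihom K F d) ∧ ∀ p ∈ 𝕏, evalB K p F = 0}

/-- The bihomogeneous vanishing ideal of a single point. -/
def ptIdealB (p : BiPt K m n) : Ideal (BiRing K m n) :=
  Ideal.span {F | (∃ d, IsBihom K F d) ∧ evalB K p F = 0}

/-- The degree-`d` piece of `S/I`. -/
def degPieceB (I : Ideal (BiRing K m n)) (d : ℤ × ℤ) :
    Submodule K (BiRing K m n ⧸ I) :=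
  (weightedHomogeneousSubmodule K (biwt m n) d).map
    (Ideal.Quotient.mkₐ K I).toLinearMap

/-- The Hilbert function of `S/I`. -/
def HFI (I : Ideal (BiRing K m n)) (d : ℤ × ℤ) : ℕ :=
  Module.finrank K (degPieceB K I d)

/-- The Hilbert function of a set of points in `P^m × P^n`. -/
def HFB (𝕏 : Finset (BiPt K m n)) (d : ℤ × ℤ) : ℕ :=
  HFI K (vIdealB K 𝕏) d

/-- The Hilbert function of a (bihomogeneous) ideal `J` of `R_𝕏 = S/I`. -/
def HFIdealB (I : Ideal (BiRing K m n)) (J : Ideal (BiRing K m n ⧸ I))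
    (d : ℤ × ℤ) : ℕ :=
  Module.finrank K ↥((Submodule.restrictScalars K J) ⊓ degPieceB K I d)

/- ### Single projective space `P^N` -/

/-- The coordinate ring `K[X_0,…,X_N]` of `P^N`. -/
abbrev PRing (N : ℕ) : Type := MvPolynomial (Fin (N+1)) K

/-- The standard grading on `K[X_0,…,X_N]` (with values in `ℤ`). -/
def wt1 (N : ℕ) : Fin (N+1) → ℤ := fun _ => 1

/-- `F` is homogeneous of degree `d`. -/
def IsHom1 {N : ℕ} (F : PRing K N) (d : ℤ) : Prop :=
  IsWeightedHomogeneous (wt1 N) F d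

/-- A good finite set of representatives of points in `P^N`. -/
def GoodSet {N : ℕ} (Y : Finset (Fin (N+1) → K)) : Prop :=
  (∀ q ∈ Y, q ≠ 0) ∧
  (∀ p ∈ Y, ∀ q ∈ Y, (∃ c : K, c ≠ 0 ∧ p = c • q) → p = q)

/-- The homogeneous vanishing ideal of a set of points in `P^N`. -/
def vIdeal1 {N : ℕ} (Y : Finset (Fin (N+1) → K)) : Ideal (PRing K N) :=
  Ideal.span {F | (∃ d, IsHom1 K F d) ∧ ∀ q ∈ Y, eval q F = 0}

/-- The degree-`d` piece of `K[X_0,…,X_N]/I`. -/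
def degPiece1 {N : ℕ} (I : Ideal (PRing K N)) (d : ℤ) :
    Submodule K (PRing K N ⧸ I) :=
  (weightedHomogeneousSubmodule K (wt1 N) d).map
    (Ideal.Quotient.mkₐ K I).toLinearMap

/-- The Hilbert function of a set of points in `P^N`. -/
def HF1 {N : ℕ} (Y : Finset (Fin (N+1) → K)) (d : ℤ) : ℕ :=
  Module.finrank K (degPiece1 K (vIdeal1 K Y) d)

/-- The Hilbert function of a homogeneous ideal of `K[X_0,…,X_N]/I`. -/
def HFIdeal1 {N : ℕ} (I : Ideal (PRing K N)) (J : Ideal (PRing K N ⧸ I))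
    (d : ℤ) : ℕ :=
  Module.finrank K ↥((Submodule.restrictScalars K J) ⊓ degPiece1 K I d)

/-- The degree `deg_Y(q)` of a point `q` in `Y ⊆ P^N`: the minimal degree of
a homogeneous separator of `q` in `Y`. -/
def deg1 {N : ℕ} (Y : Finset (Fin (N+1) → K)) (q : Fin (N+1) → K) : ℕ :=
  sInf {d : ℕ | ∃ F : PRing K N, IsHom1 K F (d : ℤ) ∧ eval q F ≠ 0 ∧
    ∀ q' ∈ Y, q' ≠ q → eval q' F = 0}

/-- The regularity index of the Hilbert function of `Y ⊆ P^N`. -/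
def regIndex1 {N : ℕ} (Y : Finset (Fin (N+1) → K)) : ℕ :=
  sInf {r : ℕ | ∀ i : ℕ, r ≤ i → HF1 K Y (i : ℤ) = Y.card}

/-- `Y ⊆ P^N` is a Cayley-Bacharach scheme. -/
def IsCB1 {N : ℕ} (Y : Finset (Fin (N+1) → K)) : Prop :=
  ∀ q ∈ Y, deg1 K Y q = regIndex1 K Y

/- ### Kähler differents -/

/-- The variables `X_1,…,X_m,Y_1,…,Y_n` indexed by `Fin (m+n)`. -/
def bvar (m n : ℕ) (v : Fin (m+n)) : Fin (m+1) ⊕ Fin (n+1) :=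
  if h : (v : ℕ) < m then Sum.inl ⟨(v : ℕ) + 1, by omega⟩
  else Sum.inr ⟨(v : ℕ) - m + 1, by have hv := v.isLt; omega⟩

/-- The Kähler different of `R = S/I` w.r.t. a system of generators `F` of
`I`: the ideal generated by the `(m+n)×(m+n)`-minors of the Jacobian matrix
`(∂F_k/∂X_i, ∂F_k/∂Y_j)`. -/
def kdiffB (I : Ideal (BiRing K m n)) {r : ℕ} (F : Fin r → BiRing K m n) :
    Ideal (BiRing K m n ⧸ I) :=
  Ideal.span (Set.range fun ρ : Fin (m+n) → Fin r =>
    Ideal.Quotient.mk I (Matrix.det (Matrix.of fun u v : Fin (m+n) =>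
      pderiv (bvar m n v) (F (ρ u)))))

/-- The Kähler different of `K[X_0,…,X_N]/I` w.r.t. a system of generators
`F` of `I` (minors w.r.t. the variables `X_1,…,X_N`). -/
def kdiff1 {N : ℕ} (I : Ideal (PRing K N)) {r : ℕ} (F : Fin r → PRing K N) :
    Ideal (PRing K N ⧸ I) :=
  Ideal.span (Set.range fun ρ : Fin N → Fin r =>
    Ideal.Quotient.mk I (Matrix.det (Matrix.of fun u v : Fin N =>
      pderiv (Fin.succ v) (F (ρ u)))))

/-- The extension `ϑ_{𝕏₁} R_𝕏` to `R_𝕏 = S/I` of the Kähler different of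
`𝕏₁ ⊆ P^m` computed from a system of generators `F` of `I_{𝕏₁}`. -/
def kdiffExtL (I : Ideal (BiRing K m n)) {r : ℕ} (F : Fin r → PRing K m) :
    Ideal (BiRing K m n ⧸ I) :=
  Ideal.span (Set.range fun ρ : Fin m → Fin r =>
    Ideal.Quotient.mk I (rename Sum.inl (Matrix.det (Matrix.of fun u v : Fin m =>
      pderiv (Fin.succ v) (F (ρ u))))))

/-- The extension `ϑ_{𝕏₂} R_𝕏` to `R_𝕏 = S/I` of the Kähler different of
`𝕏₂ ⊆ P^n` computed from a system of generators `G` of `I_{𝕏₂}`. -/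
def kdiffExtR (I : Ideal (BiRing K m n)) {r : ℕ} (G : Fin r → PRing K n) :
    Ideal (BiRing K m n ⧸ I) :=
  Ideal.span (Set.range fun ρ : Fin n → Fin r =>
    Ideal.Quotient.mk I (rename Sum.inr (Matrix.det (Matrix.of fun u v : Fin n =>
      pderiv (Fin.succ v) (G (ρ u))))))

/- ### Regular sequences, ACM, complete intersections -/

/-- `a, b` form a regular sequence. -/
def RegPair {A : Type*} [CommRing A] (a b : A) : Prop :=
  (∀ z : A, a * z = 0 → z = 0) ∧
  (∀ z : A, b * z ∈ Ideal.span {a} → z ∈ Ideal.span {a})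

/-- The image `x₀` of `X_0` in `S/I`. -/
def x0B (I : Ideal (BiRing K m n)) : BiRing K m n ⧸ I :=
  Ideal.Quotient.mk I (MvPolynomial.X (Sum.inl 0))

/-- The image `y₀` of `Y_0` in `S/I`. -/
def y0B (I : Ideal (BiRing K m n)) : BiRing K m n ⧸ I :=
  Ideal.Quotient.mk I (MvPolynomial.X (Sum.inr 0))

/-- The standing assumption for ACM sets of points: (after a change of
coordinates) `x₀, y₀` form a regular sequence in `R_𝕏`. -/
def ACMxy (𝕏 : Finset (BiPt K m n)) : Prop :=
  RegPair (x0B K (vIdealB K 𝕏)) (y0B K (vIdealB K 𝕏))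

/-- `𝕏` is arithmetically Cohen-Macaulay: some bihomogeneous linear forms
`ℓ` of degree `(1,0)` and `ℓ'` of degree `(0,1)` give a regular sequence in
`R_𝕏` (for points this is equivalent to `depth R_𝕏 = 2`). -/
def IsACM (𝕏 : Finset (BiPt K m n)) : Prop :=
  ∃ l l' : BiRing K m n, IsBihom K l (1, 0) ∧ IsBihom K l' (0, 1) ∧
    RegPair (Ideal.Quotient.mk (vIdealB K 𝕏) l) (Ideal.Quotient.mk (vIdealB K 𝕏) l')

/-- A regular sequence in a commutative ring, given as a list:
each entry is a non-zerodivisor modulo the preceding ones, and the list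
generates a proper ideal. -/
def IsRegSeq {A : Type*} [CommRing A] (l : List A) : Prop :=
  (∀ (i : ℕ) (h : i < l.length), ∀ z : A,
      l.get ⟨i, h⟩ * z ∈ Ideal.span {x | x ∈ l.take i} →
      z ∈ Ideal.span {x | x ∈ l.take i}) ∧
  Ideal.span {x | x ∈ l} ≠ ⊤

/-- `𝕏` is a complete intersection of type `(d_1,…,d_m,d'_1,…,d'_n)`. -/
def IsCIB (𝕏 : Finset (BiPt K m n)) (d : Fin m → ℕ) (d' : Fin n → ℕ) : Prop :=
  ∃ (F : Fin m → BiRing K m n) (G : Fin n → BiRing K m n),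
    (∀ i, IsBihom K (F i) ((d i : ℤ), 0)) ∧
    (∀ j, IsBihom K (G j) (0, (d' j : ℤ))) ∧
    IsRegSeq (List.ofFn F ++ List.ofFn G) ∧
    Ideal.span (Set.range F ∪ Set.range G) = vIdealB K 𝕏

/-- `Y ⊆ P^N` is a complete intersection of type `(d_1,…,d_N)`. -/
def IsCI1 {N : ℕ} (Y : Finset (Fin (N+1) → K)) (d : Fin N → ℕ) : Prop :=
  ∃ F : Fin N → PRing K N,
    (∀ i, IsHom1 K (F i) (d i : ℤ)) ∧
    IsRegSeq (List.ofFn F) ∧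
    Ideal.span (Set.range F) = vIdeal1 K Y

/- ### Separators and the Cayley-Bacharach property -/

/-- `F` is a separator of `p` in `𝕏`. -/
def IsSepB (𝕏 : Finset (BiPt K m n)) (p : BiPt K m n) (F : BiRing K m n) : Prop :=
  evalB K p F ≠ 0 ∧ ∀ q ∈ 𝕏, q ≠ p → evalB K q F = 0

/-- The set of degrees of bihomogeneous separators of `p` in `𝕏`. -/
def sepDegsB (𝕏 : Finset (BiPt K m n)) (p : BiPt K m n) : Set (ℤ × ℤ) :=
  {d | ∃ F, IsBihom K F d ∧ IsSepB K 𝕏 p F}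

/-- `deg_𝕏(p)`: the set of degrees of minimal separators of `p` in `𝕏`
(mimimality w.r.t. the componentwise order). -/
def minSepDegsB (𝕏 : Finset (BiPt K m n)) (p : BiPt K m n) : Set (ℤ × ℤ) :=
  {d ∈ sepDegsB K 𝕏 p | ∀ d' ∈ sepDegsB K 𝕏 p, ¬ d' < d}

/-- `𝕏` has the Cayley-Bacharach property: the Hilbert function of
`𝕏 \ {p}` is independent of the choice of `p ∈ 𝕏`. -/
def HasCB (𝕏 : Finset (BiPt K m n)) : Prop :=
  ∀ p ∈ 𝕏, ∀ q ∈ 𝕏, ∀ d : ℤ × ℤ, HFB K (𝕏.erase p) d = HFB K (𝕏.erase q) d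

/- ### Star property and fibres -/

/-- The `(⋆)`-property. -/
def StarProp (𝕏 : Finset (BiPt K m n)) : Prop :=
  ∀ p ∈ 𝕏, ∀ q ∈ 𝕏, ((p.1, q.2) ∈ 𝕏 ∨ (q.1, p.2) ∈ 𝕏)

/-- `V_j = π₁(π₂⁻¹(q'_j) ∩ 𝕏)` for `q'_j = p.2`. -/
def Vset (𝕏 : Finset (BiPt K m n)) (p : BiPt K m n) : Finset (Fin (m+1) → K) :=
  (𝕏.filter fun q => q.2 = p.2).image Prod.fst

/-- `W_i = π₂(π₁⁻¹(q_i) ∩ 𝕏)` for `q_i = p.1`. -/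
def Wset (𝕏 : Finset (BiPt K m n)) (p : BiPt K m n) : Finset (Fin (n+1) → K) :=
  (𝕏.filter fun q => q.1 = p.1).image Prod.snd

end MultiProjPoints
namespace MPAux

lemma det_mem_aux {R : Type*} [CommRing R] {n : ℕ} (N : Submodule R (Fin n → R)) (m : ℕ)
    (M : Matrix (Fin (n+m)) (Fin (n+m)) R)
    (h : ∀ u, (fun v => M u (Fin.castAdd m v)) ∈ N) :
    M.det ∈ Ideal.span {d | ∃ A : Matrix (Fin n) (Fin n) R, (∀ u, A u ∈ N) ∧ d = A.det} := by
  induction m with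
  | zero => exact Ideal.subset_span ⟨M, h, rfl⟩
  | succ m ih =>
    have := Matrix.det_succ_column (n := n + m) M (Fin.last (n+m))
    rw [this]
    refine Ideal.sum_mem _ fun i _ => Ideal.mul_mem_left _ _ (ih _ fun u => ?_)
    have := h (i.succAbove u)
    convert this using 2 with v
    simp only [Matrix.submatrix_apply, Fin.succAbove_last]
    rfl

lemma det_mem_span {R : Type*} [CommRing R] {n : ℕ} {ι : Type*} [Fintype ι]
    (g : ι → Fin n → R) (A : Matrix (Fin n) (Fin n) R)
    (h : ∀ u, A u ∈ Submodule.span R (Set.range g)) :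
    A.det ∈ Ideal.span (Set.range fun ρ : Fin n → ι => Matrix.det (Matrix.of fun u => g (ρ u))) := by
  classical
  simp only [Submodule.mem_span_range_iff_exists_fun] at h
  choose a ha using h
  have e : A.det = Matrix.detRowAlternating (fun u => ∑ k, a u k • g k) := by
    simp only [ha]; rfl
  rw [e, ← AlternatingMap.coe_multilinearMap, MultilinearMap.map_sum]
  refine Ideal.sum_mem _ fun ρ _ => ?_
  rw [MultilinearMap.map_smul_univ]
  exact Ideal.mul_mem_left _ _ (Ideal.subset_span ⟨ρ, rfl⟩)

lemma row_mem {K S : Type*} [CommRing K] [CommRing S] [Algebra K S] {N : Type*}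
    (D : N → Derivation K S S) (I : Ideal S) (s : Set S) (hs : Ideal.span s = I)
    (f : S) (hf : f ∈ I) :
    (fun v => Ideal.Quotient.mk I (D v f)) ∈
      Submodule.span (S ⧸ I) ((fun g => fun v => Ideal.Quotient.mk I (D v g)) '' s) := by
  subst hs
  induction hf using Submodule.span_induction with
  | mem x hx => exact Submodule.subset_span ⟨x, hx, rfl⟩
  | zero => simp only [map_zero]; exact Submodule.zero_mem _
  | add x y _ _ hx hy =>
    simp only [map_add]
    exact Submodule.add_mem _ hx hy
  | smul a x hx hx' =>
    have : (fun v => Ideal.Quotient.mk (Ideal.span s) (D v (a • x))) =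
        Ideal.Quotient.mk (Ideal.span s) a • (fun v => Ideal.Quotient.mk (Ideal.span s) (D v x)) := by
      funext v
      have hx0 : Ideal.Quotient.mk (Ideal.span s) x = 0 := Ideal.Quotient.eq_zero_iff_mem.2 hx
      simp [hx0]
    rw [this]
    exact Submodule.smul_mem _ _ hx'

section core
variable {K : Type} [Field K] {m n : ℕ} {V : Type} (e : Fin (m+1) ⊕ Fin (n+1) ≃ V)
  (c : Fin (m+1) → K)

/-- substitute the constants `c` for the first block. -/
def sub : MvPolynomial V K →ₐ[K] MvPolynomial (Fin (n+1)) K :=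
  aeval fun v => Sum.elim (fun i => C (c i)) X (e.symm v)

def L : Ideal (MvPolynomial V K) :=
  Ideal.span (Set.range fun i => X (e (Sum.inl i)) - C (c i) * X (e (Sum.inl 0)))

lemma sub_rename (f : MvPolynomial (Fin (n+1)) K) :
    sub e c (rename (e ∘ Sum.inr) f) = f := by
  simp only [sub, aeval_rename]
  have : ((fun v => Sum.elim (fun i => C (c i)) X (e.symm v)) ∘ e ∘ Sum.inr :
    Fin (n+1) → MvPolynomial (Fin (n+1)) K) = X := by funext j; simp
  rw [this]; simp

lemma sub_L (hc : c 0 = 1) (f : MvPolynomial V K) (hf : f ∈ L e c) : sub e c f = 0 := by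
  have : L e c ≤ RingHom.ker (sub e c) := by
    refine Ideal.span_le.2 ?_
    rintro _ ⟨i, rfl⟩
    simp [sub, hc, RingHom.mem_ker]
  exact this hf

variable (w : V → ℤ × ℤ) (ε : ℤ × ℤ ≃+ ℤ × ℤ)

lemma weight_eq (hw1 : ∀ i, w (e (Sum.inl i)) = ε (1, 0)) (hw2 : ∀ j, w (e (Sum.inr j)) = ε (0, 1))
    (u : V →₀ ℕ) :
    Finsupp.weight w u = ε ((∑ i, u (e (Sum.inl i)) : ℕ), (∑ j, u (e (Sum.inr j)) : ℕ)) := by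
  classical
  have : Fintype V := Fintype.ofEquiv _ e
  rw [Finsupp.weight_apply, Finsupp.sum_fintype _ _ (by simp), ← e.sum_comp, Fintype.sum_sum_type]
  simp only [hw1, hw2, ← map_nsmul, ← map_sum, ← map_add]
  congr 1
  ext <;> simp [Prod.fst_sum, Prod.snd_sum]

lemma sub_monomial (u : V →₀ ℕ) (a : K) :
    sub e c (monomial u a) =
      C (a * ∏ i, c i ^ u (e (Sum.inl i))) * ∏ j, X j ^ u (e (Sum.inr j)) := by
  classical
  have : Fintype V := Fintype.ofEquiv _ e
  rw [sub, aeval_monomial, Finsupp.prod_fintype _ _ (by simp), ← e.prod_comp, Fintype.prod_sum_type]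
  simp [algebraMap_eq, mul_assoc]

lemma key (hw1 : ∀ i, w (e (Sum.inl i)) = ε (1, 0)) (hw2 : ∀ j, w (e (Sum.inr j)) = ε (0, 1))
    (i : ℕ) (j : ℤ) (f : MvPolynomial V K) (hf : IsWeightedHomogeneous w f (ε (i, j))) :
    f - X (e (Sum.inl 0)) ^ i * rename (e ∘ Sum.inr) (sub e c f) ∈ L e c ∧
    IsWeightedHomogeneous (fun _ : Fin (n+1) => (1 : ℤ)) (sub e c f) j := by
  classical
  have : Fintype V := Fintype.ofEquiv _ e
  have hu : ∀ u ∈ f.support, (∑ i, u (e (Sum.inl i))) = i ∧ ((∑ j, u (e (Sum.inr j)) : ℕ) : ℤ) = j := by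
    intro u hu
    have := hf (mem_support_iff.1 hu)
    rw [weight_eq e w ε hw1 hw2 u] at this
    have := ε.injective this
    simp only [Prod.mk.injEq] at this
    exact ⟨by exact_mod_cast this.1, this.2⟩
  constructor
  · have : f - X (e (Sum.inl 0)) ^ i * rename (e ∘ Sum.inr) (sub e c f) =
        ∑ u ∈ f.support, (monomial u (coeff u f) - X (e (Sum.inl 0)) ^ i *
          rename (e ∘ Sum.inr) (sub e c (monomial u (coeff u f)))) := by
      rw [Finset.sum_sub_distrib, ← Finset.mul_sum, ← map_sum, ← map_sum, support_sum_monomial_coeff]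
    rw [this]
    refine Ideal.sum_mem _ fun u hu' => ?_
    obtain ⟨h1, -⟩ := hu u hu'
    rw [← Ideal.Quotient.eq, sub_monomial, monomial_eq, Finsupp.prod_fintype _ _ (by simp),
      ← e.prod_comp, Fintype.prod_sum_type]
    have hx : ∀ k, Ideal.Quotient.mk (L e c) (X (e (Sum.inl k))) =
        Ideal.Quotient.mk (L e c) (C (c k)) * Ideal.Quotient.mk (L e c) (X (e (Sum.inl 0))) := by
      intro k
      rw [← map_mul, Ideal.Quotient.eq]
      exact Ideal.subset_span ⟨k, rfl⟩
    simp only [map_mul, map_prod, map_pow, rename_C, rename_X, Function.comp]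
    rw [Finset.prod_congr rfl fun k _ => by rw [hx k, mul_pow], Finset.prod_mul_distrib,
      Finset.prod_pow_eq_pow_sum, h1]
    ring
  · rw [← support_sum_monomial_coeff f, map_sum]
    refine IsWeightedHomogeneous.sum _ _ _ fun u hu' => ?_
    obtain ⟨-, h2⟩ := hu u hu'
    rw [sub_monomial]
    have a1 := isWeightedHomogeneous_C (fun _ : Fin (n+1) => (1 : ℤ)) (coeff u f * ∏ i, c i ^ u (e (Sum.inl i)))
    have a2 := IsWeightedHomogeneous.prod (w := (fun _ : Fin (n+1) => (1 : ℤ))) Finset.univ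
      (fun j => (X j : MvPolynomial (Fin (n+1)) K) ^ u (e (Sum.inr j)))
      (fun j => u (e (Sum.inr j)) • (1 : ℤ))
      (fun j _ => (isWeightedHomogeneous_X K _ j).pow _)
    have := a1.mul a2
    convert this using 1
    simp [← h2]

lemma rename_hom (hw2 : ∀ j, w (e (Sum.inr j)) = ε (0, 1)) (f : MvPolynomial (Fin (n+1)) K) (j : ℤ)
    (hf : IsWeightedHomogeneous (fun _ : Fin (n+1) => (1 : ℤ)) f j) :
    IsWeightedHomogeneous w (rename (e ∘ Sum.inr) f) (ε (0, j)) := by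
  classical
  rw [← support_sum_monomial_coeff f, map_sum]
  refine IsWeightedHomogeneous.sum _ _ _ fun u hu' => ?_
  have h := hf (mem_support_iff.1 hu')
  rw [rename_monomial]
  apply isWeightedHomogeneous_monomial
  rw [Finsupp.weight_apply, Finsupp.sum_mapDomain_index (by simp) (by intros; exact add_smul _ _ _)]
  rw [Finsupp.weight_apply] at h
  simp only [Function.comp, hw2, ← h, Finsupp.sum, ← map_nsmul, ← map_sum]
  congr 1
  ext <;> simp [Prod.fst_sum, Prod.snd_sum]

lemma ideal_eq (hc : c 0 = 1)
    (hw1 : ∀ i, w (e (Sum.inl i)) = ε (1, 0)) (hw2 : ∀ j, w (e (Sum.inr j)) = ε (0, 1))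
    (x0 : K) (hx0 : x0 ≠ 0)
    (P : Set (V → K)) (Q : Set (Fin (n+1) → K))
    (hP1 : ∀ p ∈ P, ∀ i, p (e (Sum.inl i)) = c i * x0)
    (hP2 : ∀ p ∈ P, p ∘ e ∘ Sum.inr ∈ Q)
    (hQ : ∀ q ∈ Q, ∃ p ∈ P, p ∘ e ∘ Sum.inr = q) :
    Ideal.span {F : MvPolynomial V K | (∃ d, IsWeightedHomogeneous w F d) ∧ ∀ p ∈ P, eval p F = 0} =
    L e c ⊔ (Ideal.span {F : MvPolynomial (Fin (n+1)) K |
      (∃ d, IsWeightedHomogeneous (fun _ : Fin (n+1) => (1 : ℤ)) F d) ∧ ∀ q ∈ Q, eval q F = 0}).map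
        (rename (e ∘ Sum.inr)) := by
  apply le_antisymm
  · refine Ideal.span_le.2 ?_
    rintro f ⟨⟨d, hd⟩, hv⟩
    by_cases hf0 : f = 0
    · subst hf0; exact Ideal.zero_mem _
    obtain ⟨u, hu⟩ := (ne_zero_iff.1 hf0)
    have hdu := hd hu
    rw [weight_eq e w ε hw1 hw2] at hdu
    rw [← hdu] at hd
    obtain ⟨k1, k2⟩ := key e c w ε hw1 hw2 _ _ f hd
    have hs : sub e c f ∈ Ideal.span {F : MvPolynomial (Fin (n+1)) K |
      (∃ d, IsWeightedHomogeneous (fun _ : Fin (n+1) => (1 : ℤ)) F d) ∧ ∀ q ∈ Q, eval q F = 0} := by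
      refine Ideal.subset_span ⟨⟨_, k2⟩, fun q hq => ?_⟩
      obtain ⟨p, hp, rfl⟩ := hQ q hq
      have : L e c ≤ RingHom.ker (eval p) := by
        refine Ideal.span_le.2 ?_
        rintro _ ⟨i, rfl⟩
        simp [RingHom.mem_ker, hP1 p hp, hc]
      have := this k1
      rw [RingHom.mem_ker, map_sub, hv p hp, map_mul, map_pow, eval_X, eval_rename, hP1 p hp, hc] at this
      simpa [hx0] using this
    have := Ideal.add_mem _ (Ideal.mem_sup_left k1) (Ideal.mem_sup_right (S := L e c)
      (Ideal.mul_mem_left _ (X (e (Sum.inl 0)) ^ (∑ i, u (e (Sum.inl i)))) (Ideal.mem_map_of_mem (rename (e ∘ Sum.inr)) hs)))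
    simpa using this
  · refine sup_le (Ideal.span_le.2 ?_) (Ideal.map_le_iff_le_comap.2 (Ideal.span_le.2 ?_))
    · rintro _ ⟨i, rfl⟩
      refine Ideal.subset_span ⟨⟨ε (1,0), ?_⟩, fun p hp => ?_⟩
      · have h1 := isWeightedHomogeneous_X K w (e (Sum.inl i))
        have h2 := (isWeightedHomogeneous_C w (c i)).mul (isWeightedHomogeneous_X K w (e (Sum.inl 0)))
        rw [hw1] at h1 h2
        rw [zero_add] at h2
        exact h1.sub h2
      · simp [hP1 p hp, hc]
    · rintro f ⟨⟨d, hd⟩, hv⟩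
      refine Ideal.subset_span ⟨⟨ε (0,d), rename_hom e w ε hw2 f d hd⟩, fun p hp => ?_⟩
      rw [eval_rename]
      exact hv _ (hP2 p hp)

end core
end MPAux

namespace MPAux
section core2
variable {K : Type} [Field K] {m n : ℕ} {V : Type} (e : Fin (m+1) ⊕ Fin (n+1) ≃ V)
  (c : Fin (m+1) → K)

/-- The ideal of maximal minors. -/
def minors {S : Type*} [CommRing S] [Algebra K S] {N r : ℕ} (I : Ideal S)
    (D : Fin N → Derivation K S S) (H : Fin r → S) : Ideal (S ⧸ I) :=
  Ideal.span (Set.range fun ρ : Fin N → Fin r =>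
    Ideal.Quotient.mk I (Matrix.det (Matrix.of fun u v : Fin N => D v (H (ρ u)))))

lemma minors_eq {S : Type*} [CommRing S] [Algebra K S] {N r : ℕ} (I : Ideal S)
    (D : Fin N → Derivation K S S) (H : Fin r → S) : minors I D H =
  Ideal.span (Set.range fun ρ : Fin N → Fin r =>
    (Matrix.det (Matrix.of fun u => (fun v : Fin N => Ideal.Quotient.mk I (D v (H (ρ u))))))) := by
  unfold minors
  congr 2
  funext ρ
  rw [RingHom.map_det]
  rfl

/-- Any determinant of derivatives of elements of `I` lies in the ideal of minors. -/
lemma det_mem_minors {S : Type*} [CommRing S] [Algebra K S] {N r : ℕ} (I : Ideal S)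
    (D : Fin N → Derivation K S S) (H : Fin r → S) (hH : Ideal.span (Set.range H) = I)
    (f : Fin N → S) (hf : ∀ u, f u ∈ I) :
    Ideal.Quotient.mk I (Matrix.det (Matrix.of fun u v : Fin N => D v (f u))) ∈ minors I D H := by
  rw [minors_eq, RingHom.map_det]
  refine det_mem_span (fun k v => Ideal.Quotient.mk I (D v (H k))) _ fun u => ?_
  have := row_mem D I (Set.range H) hH (f u) (hf u)
  rw [← Set.range_comp] at this
  exact this

lemma pderiv_rename_b (f : MvPolynomial (Fin (n+1)) K) (j : Fin (n+1)) :
    pderiv (e (Sum.inr j)) (rename (e ∘ Sum.inr) f) = rename (e ∘ Sum.inr) (pderiv j f) :=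
  pderiv_rename (f := e ∘ Sum.inr) (e.injective.comp Sum.inr_injective) j f

lemma pderiv_rename_a (f : MvPolynomial (Fin (n+1)) K) (i : Fin (m+1)) :
    pderiv (e (Sum.inl i)) (rename (e ∘ Sum.inr) f) = 0 := by
  classical
  apply pderiv_eq_zero_of_notMem_vars
  intro h
  have := vars_rename (e ∘ Sum.inr) f h
  simp at this

lemma minors_map (I2 : Ideal (MvPolynomial (Fin (n+1)) K)) (I : Ideal (MvPolynomial V K))
    (hI : I = L e c ⊔ I2.map (rename (e ∘ Sum.inr)))
    (ψ : (MvPolynomial (Fin (n+1)) K ⧸ I2) →+* (MvPolynomial V K ⧸ I))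
    (hψ : ∀ f, ψ (Ideal.Quotient.mk I2 f) = Ideal.Quotient.mk I (rename (e ∘ Sum.inr) f))
    {N : ℕ} (ev : Fin m ⊕ Fin n ≃ Fin N) (bv : Fin N → V)
    (hb1 : ∀ i, bv (ev (Sum.inl i)) = e (Sum.inl i.succ))
    (hb2 : ∀ j, bv (ev (Sum.inr j)) = e (Sum.inr j.succ))
    {r r2 : ℕ} (G : Fin r2 → MvPolynomial (Fin (n+1)) K) (hG : Ideal.span (Set.range G) = I2)
    (H : Fin r → MvPolynomial V K) (hH : Ideal.span (Set.range H) = I) :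
    minors I (fun v => pderiv (bv v)) H =
      (minors I2 (fun v : Fin n => pderiv (R := K) (Fin.succ v)) G).map ψ := by
  classical
  apply le_antisymm
  · refine Ideal.span_le.2 ?_
    rintro _ ⟨ρ, rfl⟩
    let g : Fin r2 → Fin n → (MvPolynomial V K ⧸ I) := fun k v =>
      ψ (Ideal.Quotient.mk I2 (pderiv v.succ (G k)))
    let e' : Fin (n + m) ≃ Fin N := finSumFinEquiv.symm.trans ((Equiv.sumComm _ _).trans ev)
    have hcol : ∀ v, e' (Fin.castAdd m v) = ev (Sum.inr v) := by intro v; simp [e']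
    have hrow : ∀ f ∈ I, (fun v : Fin n => Ideal.Quotient.mk I (pderiv (e (Sum.inr v.succ)) f)) ∈
        Submodule.span (MvPolynomial V K ⧸ I) (Set.range g) := by
      intro f hf
      have hs : Ideal.span ((Set.range fun i => (X (e (Sum.inl i)) - C (c i) * X (e (Sum.inl 0)) :
          MvPolynomial V K)) ∪ (rename (e ∘ Sum.inr) '' Set.range G)) = I := by
        rw [Ideal.span_union, hI, ← hG, Ideal.map_span]; rfl
      have := row_mem (fun v : Fin n => pderiv (R := K) (e (Sum.inr v.succ))) I _ hs f hf
      refine (Submodule.span_le.2 ?_) this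
      rintro _ ⟨x, (⟨i, rfl⟩ | ⟨_, ⟨k, rfl⟩, rfl⟩), rfl⟩
      · have h0 : (fun v : Fin n => Ideal.Quotient.mk I (pderiv (e (Sum.inr v.succ))
            (X (e (Sum.inl i)) - C (c i) * X (e (Sum.inl 0))))) = 0 := by
          funext v
          simp [pderiv_X]
        have h1 := Submodule.zero_mem (Submodule.span (MvPolynomial V K ⧸ I) (Set.range g))
        rw [← h0] at h1
        exact h1
      · refine Submodule.subset_span ⟨k, ?_⟩
        funext v
        simp only [g, hψ, pderiv_rename_b]
    have h1 := det_mem_aux (Submodule.span _ (Set.range g)) m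
      (((Ideal.Quotient.mk I).mapMatrix (Matrix.of fun u v : Fin N => pderiv (bv v) (H (ρ u)))).submatrix e' e')
      (by
        intro u
        have := hrow (H (ρ (e' u))) (by rw [← hH]; exact Ideal.subset_span ⟨_, rfl⟩)
        convert this using 2 with v
        simp [hcol, hb2])
    rw [Matrix.det_submatrix_equiv_self, ← RingHom.map_det] at h1
    refine (Ideal.span_le.2 ?_) h1
    rintro _ ⟨A, hA, rfl⟩
    refine (Ideal.span_le.2 ?_) (det_mem_span g A hA)
    rintro _ ⟨ρ', rfl⟩
    have : Matrix.det (Matrix.of fun u => g (ρ' u)) = ψ (Ideal.Quotient.mk I2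
        (Matrix.det (Matrix.of fun u v : Fin n => pderiv v.succ (G (ρ' u))))) := by
      rw [RingHom.map_det, RingHom.map_det]; rfl
    simp only [this]
    exact Ideal.mem_map_of_mem _ (Ideal.subset_span ⟨ρ', rfl⟩)
  · refine Ideal.map_le_iff_le_comap.2 (Ideal.span_le.2 ?_)
    rintro _ ⟨ρ, rfl⟩
    let f : Fin m ⊕ Fin n → MvPolynomial V K := Sum.elim
      (fun i => X (e (Sum.inl i.succ)) - C (c i.succ) * X (e (Sum.inl 0)))
      (fun j => rename (e ∘ Sum.inr) (G (ρ j)))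
    have hf : ∀ t, f t ∈ I := by
      rw [hI]
      rintro (i | j)
      · exact Ideal.mem_sup_left (Ideal.subset_span ⟨i.succ, rfl⟩)
      · refine Ideal.mem_sup_right (Ideal.mem_map_of_mem _ ?_)
        rw [← hG]; exact Ideal.subset_span ⟨_, rfl⟩
    have := det_mem_minors I (fun v => pderiv (R := K) (bv v)) H hH (fun u => f (ev.symm u)) (fun u => hf _)
    simp only [SetLike.mem_coe, Ideal.mem_comap, hψ]
    convert this using 2
    rw [← Matrix.det_submatrix_equiv_self ev]
    have hblk : (Matrix.of fun u v : Fin N => pderiv (bv v) (f (ev.symm u))).submatrix ev ev =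
        Matrix.fromBlocks 1 0 0 ((rename (R := K) (e ∘ Sum.inr)).toRingHom.mapMatrix
          (Matrix.of fun u v : Fin n => pderiv v.succ (G (ρ u)))) := by
      ext1 s t
      rcases s with s | s <;> rcases t with t | t
      · simp [f, hb1, pderiv_X, Matrix.one_apply, Pi.single_apply, eq_comm]
      · simp [f, hb2, pderiv_X]
      · simp [f, hb1, pderiv_rename_a]
      · simp [f, hb2, pderiv_rename_b]
    rw [hblk, Matrix.det_fromBlocks_zero₂₁, Matrix.det_one, one_mul, ← RingHom.map_det]
    rfl

variable (w : V → ℤ × ℤ) (ε : ℤ × ℤ ≃+ ℤ × ℤ)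

theorem core (hc : c 0 = 1)
    (hw1 : ∀ i, w (e (Sum.inl i)) = ε (1, 0)) (hw2 : ∀ j, w (e (Sum.inr j)) = ε (0, 1))
    (I2 : Ideal (MvPolynomial (Fin (n+1)) K)) (I : Ideal (MvPolynomial V K))
    (hI : I = L e c ⊔ I2.map (rename (e ∘ Sum.inr)))
    {N : ℕ} (ev : Fin m ⊕ Fin n ≃ Fin N) (bv : Fin N → V)
    (hb1 : ∀ i, bv (ev (Sum.inl i)) = e (Sum.inl i.succ))
    (hb2 : ∀ j, bv (ev (Sum.inr j)) = e (Sum.inr j.succ))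
    {r r2 : ℕ} (G : Fin r2 → MvPolynomial (Fin (n+1)) K) (hG : Ideal.span (Set.range G) = I2)
    (H : Fin r → MvPolynomial V K) (hH : Ideal.span (Set.range H) = I) (i : ℕ) (j : ℤ) :
    Module.finrank K ↥((Submodule.restrictScalars K (minors I (fun v => pderiv (R := K) (bv v)) H)) ⊓
      (weightedHomogeneousSubmodule K w (ε (i, j))).map (Ideal.Quotient.mkₐ K I).toLinearMap) =
    Module.finrank K ↥((Submodule.restrictScalars K
        (minors I2 (fun v : Fin n => pderiv (R := K) (Fin.succ v)) G)) ⊓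
      (weightedHomogeneousSubmodule K (fun _ : Fin (n+1) => (1:ℤ)) j).map
        (Ideal.Quotient.mkₐ K I2).toLinearMap) := by
  have hle : I2 ≤ I.comap (rename (R := K) (e ∘ Sum.inr)) := by
    rw [← Ideal.map_le_iff_le_comap, hI]; exact le_sup_right
  let ψ : (MvPolynomial (Fin (n+1)) K ⧸ I2) →ₐ[K] (MvPolynomial V K ⧸ I) :=
    Ideal.quotientMapₐ I (rename (R := K) (e ∘ Sum.inr)) hle
  have hψ : ∀ f, ψ (Ideal.Quotient.mk I2 f) = Ideal.Quotient.mk I (rename (e ∘ Sum.inr) f) :=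
    fun f => rfl
  have hle' : I ≤ I2.comap (sub e c) := by
    rw [hI]
    refine sup_le (fun f hf => ?_) (Ideal.map_le_iff_le_comap.2 fun f hf => ?_)
    · rw [Ideal.mem_comap, sub_L e c hc f hf]; exact Ideal.zero_mem _
    · rw [Ideal.mem_comap, Ideal.mem_comap, sub_rename]; exact hf
  let π : (MvPolynomial V K ⧸ I) →ₐ[K] (MvPolynomial (Fin (n+1)) K ⧸ I2) :=
    Ideal.quotientMapₐ I2 (sub e c) hle'
  have hπ : ∀ f, π (Ideal.Quotient.mk I f) = Ideal.Quotient.mk I2 (sub e c f) := fun f => rfl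
  have hπψ : ∀ z, π (ψ z) = z := by
    intro z
    obtain ⟨f, rfl⟩ := Ideal.Quotient.mk_surjective z
    rw [hψ, hπ, sub_rename]
  let x : MvPolynomial V K ⧸ I := Ideal.Quotient.mk I (X (e (Sum.inl 0)))
  have hπx : π x = 1 := by
    rw [hπ]; simp [sub, hc]
  let θ : (MvPolynomial (Fin (n+1)) K ⧸ I2) →ₗ[K] (MvPolynomial V K ⧸ I) :=
    (LinearMap.mulLeft K (x ^ i)).comp ψ.toLinearMap
  have hθ : ∀ z, θ z = x ^ i * ψ z := fun z => rfl
  have hinj : Function.Injective θ := by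
    apply Function.LeftInverse.injective (g := π)
    intro z
    rw [hθ, map_mul, map_pow, hπx, one_pow, one_mul, hπψ]
  have hmin := minors_map e c I2 I hI ψ.toRingHom hψ ev bv hb1 hb2 G hG H hH
  rw [(Submodule.equivMapOfInjective θ hinj _).finrank_eq]
  refine congrArg (fun W : Submodule K (MvPolynomial V K ⧸ I) => Module.finrank K W) ?_
  rw [hmin]
  apply le_antisymm
  · rintro z ⟨hz1, f, hf, rfl⟩
    have hf' : IsWeightedHomogeneous w f (ε (i, j)) := hf
    obtain ⟨k1, k2⟩ := key e c w ε hw1 hw2 i j f hf'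
    refine ⟨π (Ideal.Quotient.mk I f), ⟨?_, sub e c f, k2, rfl⟩, ?_⟩
    · have : Ideal.map ψ.toRingHom (minors I2 (fun v : Fin n => pderiv (R := K) (Fin.succ v)) G) ≤
          (minors I2 (fun v : Fin n => pderiv (R := K) (Fin.succ v)) G).comap π.toRingHom := by
        refine Ideal.map_le_iff_le_comap.2 fun z hz => ?_
        have : π (ψ z) ∈ minors I2 (fun v : Fin n => pderiv (R := K) (Fin.succ v)) G := by
          rw [hπψ]; exact hz
        exact this
      exact this hz1
    · rw [hθ, hπ, hψ]
      have h1 : f - X (e (Sum.inl 0)) ^ i * rename (e ∘ Sum.inr) (sub e c f) ∈ I := by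
        rw [hI]; exact Ideal.mem_sup_left k1
      have h2 := (Ideal.Quotient.eq.2 h1).symm
      rw [map_mul, map_pow] at h2
      exact h2
  · rintro _ ⟨z, ⟨hz1, f, hf, rfl⟩, rfl⟩
    have hf' : IsWeightedHomogeneous (fun _ : Fin (n+1) => (1:ℤ)) f j := hf
    refine ⟨Ideal.mul_mem_left _ (x ^ i) (Ideal.mem_map_of_mem ψ.toRingHom hz1),
      X (e (Sum.inl 0)) ^ i * rename (e ∘ Sum.inr) f, ?_, ?_⟩
    · have h1 := ((isWeightedHomogeneous_X K w (e (Sum.inl 0))).pow i).mul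
        (rename_hom e w ε hw2 f j hf')
      have h2 : i • w (e (Sum.inl 0)) + ε (0, j) = ε (i, j) := by
        rw [hw1, ← map_nsmul, ← map_add]; congr 1; ext <;> simp
      rw [h2] at h1
      exact h1
    · rw [hθ]
      exact (map_mul (Ideal.Quotient.mk I) _ _).trans (by rw [map_pow]; rfl)

end core2

open MultiProjPoints in
lemma eval_zero_left {K : Type} [Field K] {m n : ℕ} (f : BiRing K m n) (d : ℤ × ℤ)
    (hf : IsWeightedHomogeneous (biwt m n) f d) (p : Fin (m+1) → K) (q : Fin (n+1) → K)
    (h : eval (Sum.elim p q) f = 0) : eval (Sum.elim 0 q) f = 0 := by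
  have hw : ∀ u ∈ f.support, ((∑ i, u (Sum.inl i) : ℕ) : ℤ) = d.1 := by
    intro u hu
    have := MPAux.weight_eq (Equiv.refl (Fin (m+1) ⊕ Fin (n+1))) (biwt m n) (AddEquiv.refl _) (fun _ => rfl) (fun _ => rfl) u
    rw [hf (mem_support_iff.1 hu)] at this
    rw [this]; simp
  by_cases hd : d.1 = 0
  · rw [← h, eval_eq', eval_eq']
    refine Finset.sum_congr rfl fun u hu => ?_
    have h0 := hw u hu
    rw [hd] at h0
    have h0 : ∑ i, u (Sum.inl i) = 0 := by exact_mod_cast h0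
    rw [Finset.sum_eq_zero_iff] at h0
    have h0 : ∀ i, u (Sum.inl i) = 0 := fun i => h0 i (Finset.mem_univ _)
    simp [Fintype.prod_sum_type, h0]
  · rw [eval_eq']
    refine Finset.sum_eq_zero fun u hu => ?_
    have h0 := hw u hu
    have : ∃ i, u (Sum.inl i) ≠ 0 := by
      by_contra! hcon
      apply hd
      rw [← h0]; simp [hcon]
    obtain ⟨i, hi⟩ := this
    rw [Finset.prod_eq_zero (Finset.mem_univ (Sum.inl i)), mul_zero]
    simp [hi]

open MultiProjPoints in
lemma vIdealB_eq {K : Type} [Field K] {m n : ℕ} (𝕏 : Finset (BiPt K m n)) :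
    vIdealB K 𝕏 = Ideal.span {F | (∃ d, IsWeightedHomogeneous (biwt m n) F d) ∧
      ∀ p ∈ (fun p : BiPt K m n => Sum.elim p.1 p.2) '' (𝕏 : Set (BiPt K m n)), eval p F = 0} := by
  unfold vIdealB
  congr 1
  ext F
  simp only [Set.forall_mem_image]
  rfl

end MPAux

open MultiProjPoints in
/-- Proposition 3.3 (c): if `s₁ = 1` then
`HF_{ϑ_𝕏}(i,j) = HF_{ϑ_{𝕏₂}}(j)` for all `(i,j) ∈ ℕ²`, and if `s₂ = 1` then
`HF_{ϑ_𝕏}(i,j) = HF_{ϑ_{𝕏₁}}(i)` for all `(i,j) ∈ ℕ²`. -/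
theorem statement_5 (K : Type) [Field K] [CharZero K] [DecidableEq K]
    (m n : ℕ) (𝕏 : Finset (BiPt K m n)) (hgood : GoodConfig K 𝕏)
    (hne : 𝕏.Nonempty) (hACM : ACMxy K 𝕏)
    -- a homogeneous system of generators of `I_{𝕏₁}`
    (r₁ : ℕ) (F : Fin r₁ → PRing K m) (hFhom : ∀ k, ∃ d, IsHom1 K (F k) d)
    (hFgen : Ideal.span (Set.range F) = vIdeal1 K (𝕏.image Prod.fst))
    -- a homogeneous system of generators of `I_{𝕏₂}`
    (r₂ : ℕ) (G : Fin r₂ → PRing K n) (hGhom : ∀ k, ∃ d, IsHom1 K (G k) d)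
    (hGgen : Ideal.span (Set.range G) = vIdeal1 K (𝕏.image Prod.snd))
    -- a bihomogeneous system of generators of `I_𝕏`
    (r : ℕ) (H : Fin r → BiRing K m n) (hHhom : ∀ k, ∃ d, IsBihom K (H k) d)
    (hHgen : Ideal.span (Set.range H) = vIdealB K 𝕏) :
    ((𝕏.image Prod.fst).card = 1 →
      ∀ i j : ℕ,
        HFIdealB K (vIdealB K 𝕏) (kdiffB K (vIdealB K 𝕏) H) ((i : ℤ), (j : ℤ)) =
          HFIdeal1 K (vIdeal1 K (𝕏.image Prod.snd))
            (kdiff1 K (vIdeal1 K (𝕏.image Prod.snd)) G) (j : ℤ)) ∧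
    ((𝕏.image Prod.snd).card = 1 →
      ∀ i j : ℕ,
        HFIdealB K (vIdealB K 𝕏) (kdiffB K (vIdealB K 𝕏) H) ((i : ℤ), (j : ℤ)) =
          HFIdeal1 K (vIdeal1 K (𝕏.image Prod.fst))
            (kdiff1 K (vIdeal1 K (𝕏.image Prod.fst)) F) (i : ℤ)) := by
  classical
  obtain ⟨p0, hp0⟩ := hne
  have hzero : ∀ (p : BiPt K m n), p ∈ 𝕏 → vIdealB K 𝕏 ≤ RingHom.ker (eval (Sum.elim 0 p.2)) := by
    intro p hp
    refine Ideal.span_le.2 ?_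
    rintro f ⟨⟨d, hd⟩, hv⟩
    exact MPAux.eval_zero_left f d hd p.1 p.2 (hv p hp)
  have hnt : (1 : BiRing K m n) ∉ vIdealB K 𝕏 := by
    intro h
    have := hzero p0 hp0 h
    simp [RingHom.mem_ker] at this
  constructor
  · intro hcard i j
    obtain ⟨x, hx⟩ := Finset.card_eq_one.1 hcard
    have hx1 : ∀ p ∈ 𝕏, p.1 = x := fun p hp => by
      have := Finset.mem_image_of_mem Prod.fst hp
      rw [hx] at this
      simpa using this
    have hx0 : x 0 ≠ 0 := by
      intro h0
      have hm : (X (Sum.inl 0) : BiRing K m n) ∈ vIdealB K 𝕏 := by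
        refine Ideal.subset_span ⟨⟨_, isWeightedHomogeneous_X K (biwt m n) _⟩, fun p hp => ?_⟩
        simp [evalB, hx1 p hp, h0]
      have := hACM.1 1 (by rw [mul_one]; exact Ideal.Quotient.eq_zero_iff_mem.2 hm)
      rw [← map_one (Ideal.Quotient.mk (vIdealB K 𝕏)), Ideal.Quotient.eq_zero_iff_mem] at this
      exact hnt this
    have hI := MPAux.ideal_eq (K := K) (Equiv.refl (Fin (m+1) ⊕ Fin (n+1))) (fun i => x i / x 0)
      (biwt m n) (AddEquiv.refl _) (div_self hx0) (fun _ => rfl) (fun _ => rfl) (x 0) hx0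
      ((fun p : BiPt K m n => Sum.elim p.1 p.2) '' (𝕏 : Set (BiPt K m n)))
      {q | q ∈ 𝕏.image Prod.snd}
      (by
        rintro _ ⟨p, hp, rfl⟩ i
        simp [hx1 p hp, hx0])
      (by
        rintro _ ⟨p, hp, rfl⟩
        exact Finset.mem_image_of_mem Prod.snd hp)
      (by
        intro q hq
        obtain ⟨p, hp, rfl⟩ := Finset.mem_image.1 hq
        exact ⟨_, ⟨p, hp, rfl⟩, rfl⟩)
    rw [← MPAux.vIdealB_eq] at hI
    exact MPAux.core (K := K) (Equiv.refl (Fin (m+1) ⊕ Fin (n+1))) (fun i => x i / x 0)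
      (biwt m n) (AddEquiv.refl _) (div_self hx0) (fun _ => rfl) (fun _ => rfl)
      (vIdeal1 K (𝕏.image Prod.snd)) (vIdealB K 𝕏) hI finSumFinEquiv (bvar m n)
      (by intro i; simp [bvar]; rfl) (by intro j; simp [bvar]; rfl) G hGgen H hHgen i j
  · intro hcard i j
    obtain ⟨x, hx⟩ := Finset.card_eq_one.1 hcard
    have hx1 : ∀ p ∈ 𝕏, p.2 = x := fun p hp => by
      have := Finset.mem_image_of_mem Prod.snd hp
      rw [hx] at this
      simpa using this
    have hx0 : x 0 ≠ 0 := by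
      intro h0
      have hm : (X (Sum.inr 0) : BiRing K m n) ∈ vIdealB K 𝕏 := by
        refine Ideal.subset_span ⟨⟨_, isWeightedHomogeneous_X K (biwt m n) _⟩, fun p hp => ?_⟩
        simp [evalB, hx1 p hp, h0]
      have := hACM.2 1 (by
        rw [mul_one, y0B, Ideal.Quotient.eq_zero_iff_mem.2 hm]; exact Ideal.zero_mem _)
      rw [Ideal.mem_span_singleton] at this
      obtain ⟨g, hg⟩ := this
      obtain ⟨g, rfl⟩ := Ideal.Quotient.mk_surjective g
      rw [x0B, ← map_mul, ← map_one (Ideal.Quotient.mk (vIdealB K 𝕏)), Ideal.Quotient.eq] at hg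
      have := hzero p0 hp0 hg
      simp [RingHom.mem_ker] at this
    have hI := MPAux.ideal_eq (K := K) (Equiv.sumComm (Fin (n+1)) (Fin (m+1))) (fun i => x i / x 0)
      (biwt m n) (AddEquiv.prodComm) (div_self hx0) (fun _ => rfl) (fun _ => rfl) (x 0) hx0
      ((fun p : BiPt K m n => Sum.elim p.1 p.2) '' (𝕏 : Set (BiPt K m n)))
      {q | q ∈ 𝕏.image Prod.fst}
      (by
        rintro _ ⟨p, hp, rfl⟩ i
        simp [hx1 p hp, hx0])
      (by
        rintro _ ⟨p, hp, rfl⟩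
        exact Finset.mem_image_of_mem Prod.fst hp)
      (by
        intro q hq
        obtain ⟨p, hp, rfl⟩ := Finset.mem_image.1 hq
        exact ⟨_, ⟨p, hp, rfl⟩, rfl⟩)
    rw [← MPAux.vIdealB_eq] at hI
    exact MPAux.core (K := K) (Equiv.sumComm (Fin (n+1)) (Fin (m+1))) (fun i => x i / x 0)
      (biwt m n) (AddEquiv.prodComm) (div_self hx0) (fun _ => rfl) (fun _ => rfl)
      (vIdeal1 K (𝕏.image Prod.fst)) (vIdealB K 𝕏) hI
      ((Equiv.sumComm (Fin n) (Fin m)).trans finSumFinEquiv) (bvar m n)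
      (by intro i; simp [bvar]; rfl) (by intro j; simp [bvar]; rfl) F hFgen H hHgen j i
end
end

section
/- Let X be an ACM set of s distinct points in P^m × P^n with s_1 = |X_1| and s_2 = |X_2|. Then for all (i,j) ∈ N^2, HF_{ϑ_X}(i,j) ≤ HF_X(i,j) ≤ HF_{ϑ_X}(i + (m+1)(s_1−1), j + (n+1)(s_2−1)). -/
/- Common setup: finite sets of points in the multiprojective space
   `P^m x P^n` over a field `K` of characteristic zero, their bihomogeneous
   vanishing ideals, bigraded Hilbert functions, Kähler differents,
   separators, Cayley-Bacharach property and complete intersections. -/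

open MvPolynomial

set_option maxHeartbeats 1000000
set_option synthInstance.maxHeartbeats 400000

noncomputable section

namespace MultiProjPoints

section Helpers

set_option linter.unusedSectionVars false

variable {K : Type} [Field K] [DecidableEq K] {m n : ℕ}

theorem vI_eval {𝕏 : Finset (BiPt K m n)} {p : BiPt K m n} (hp : p ∈ 𝕏) {F : BiRing K m n}
    (hF : F ∈ vIdealB K 𝕏) : evalB K p F = 0 := by
  have : vIdealB K 𝕏 ≤ RingHom.ker (eval (Sum.elim p.1 p.2) : BiRing K m n →+* K) := by
    refine Ideal.span_le.2 ?_
    rintro G ⟨-, hG⟩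
    exact hG p hp
  exact this hF

theorem hom_sub {F G : BiRing K m n} {d : ℤ × ℤ} (hF : IsBihom K F d) (hG : IsBihom K G d) :
    IsBihom K (F - G) d :=
  (weightedHomogeneousSubmodule K (biwt m n) d).sub_mem hF hG

theorem hom_CX (c : K) (v : Fin (m+1) ⊕ Fin (n+1)) :
    IsBihom K (C c * X v : BiRing K m n) (biwt m n v) := by
  have := (isWeightedHomogeneous_C (biwt m n) c).mul (isWeightedHomogeneous_X K (biwt m n) v)
  rwa [zero_add] at this

theorem hom_pow {F : BiRing K m n} {d : ℤ × ℤ} (hF : IsBihom K F d) (k : ℕ) :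
    IsBihom K (F ^ k) (k • d) := IsWeightedHomogeneous.pow hF k

/-- separating linear data -/
theorem sep_idx {N : ℕ} {a p : Fin (N+1) → K} (ha : a ≠ 0) (hp : p ≠ 0)
    (h : (∃ c : K, c ≠ 0 ∧ p = c • a) → p = a) (hap : a ≠ p) :
    ∃ j k, a j * p k - a k * p j ≠ 0 := by
  by_contra! hcon
  obtain ⟨j, hj⟩ := Function.ne_iff.1 ha
  simp only [Pi.zero_apply] at hj
  have key : p = (p j / a j) • a := by
    funext k
    have := hcon j k
    simp only [Pi.smul_apply, smul_eq_mul]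
    field_simp
    linear_combination this
  refine hap (h ⟨p j / a j, ?_, key⟩).symm
  intro h0
  rw [h0, zero_smul] at key
  exact hp key

theorem sepL {𝕏 : Finset (BiPt K m n)} (hgood : GoodConfig K 𝕏) {p : BiPt K m n} (hp : p ∈ 𝕏) :
    ∃ L : BiRing K m n, IsBihom K L ((((𝕏.image Prod.fst).card : ℤ) - 1), 0) ∧
      evalB K p L ≠ 0 ∧ ∀ q ∈ 𝕏, q.1 ≠ p.1 → evalB K q L = 0 := by
  have h1 : ∀ a ∈ (𝕏.image Prod.fst).erase p.1, ∃ l : BiRing K m n, IsBihom K l (1, 0) ∧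
      evalB K p l ≠ 0 ∧ ∀ q : BiPt K m n, q.1 = a → evalB K q l = 0 := by
    intro a ha
    rw [Finset.mem_erase, Finset.mem_image] at ha
    obtain ⟨hap, q, hq, rfl⟩ := ha
    obtain ⟨j, k, hjk⟩ := sep_idx (hgood.1 q hq).1 (hgood.1 p hp).1 (hgood.2.1 p hp q hq) hap
    refine ⟨C (q.1 j) * X (Sum.inl k) - C (q.1 k) * X (Sum.inl j),
      hom_sub (hom_CX _ _) (hom_CX _ _), ?_, ?_⟩
    · simpa [evalB] using hjk
    · intro q' hq'
      simp [evalB, hq', mul_comm]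
  choose! l hl using h1
  refine ⟨∏ a ∈ (𝕏.image Prod.fst).erase p.1, l a, ?_, ?_, ?_⟩
  · have := IsWeightedHomogeneous.prod ((𝕏.image Prod.fst).erase p.1) l (fun _ => ((1 : ℤ), (0 : ℤ)))
      (fun {a} ha => (hl a ha).1)
    have hc := Finset.card_erase_add_one (Finset.mem_image_of_mem Prod.fst hp)
    rw [Finset.sum_const] at this
    unfold IsBihom
    convert this using 1
    ext <;> simp
    rw [← hc]; push_cast; ring
  · simp only [evalB, map_prod]
    exact Finset.prod_ne_zero_iff.2 fun a ha => (hl a ha).2.1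
  · intro q hq hqp
    simp only [evalB, map_prod]
    have hm : q.1 ∈ (𝕏.image Prod.fst).erase p.1 :=
      Finset.mem_erase.2 ⟨hqp, Finset.mem_image_of_mem _ hq⟩
    exact Finset.prod_eq_zero hm ((hl _ hm).2.2 q rfl)

theorem sepR {𝕏 : Finset (BiPt K m n)} (hgood : GoodConfig K 𝕏) {p : BiPt K m n} (hp : p ∈ 𝕏) :
    ∃ L : BiRing K m n, IsBihom K L (0, (((𝕏.image Prod.snd).card : ℤ) - 1)) ∧
      evalB K p L ≠ 0 ∧ ∀ q ∈ 𝕏, q.2 ≠ p.2 → evalB K q L = 0 := by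
  have h1 : ∀ a ∈ (𝕏.image Prod.snd).erase p.2, ∃ l : BiRing K m n, IsBihom K l (0, 1) ∧
      evalB K p l ≠ 0 ∧ ∀ q : BiPt K m n, q.2 = a → evalB K q l = 0 := by
    intro a ha
    rw [Finset.mem_erase, Finset.mem_image] at ha
    obtain ⟨hap, q, hq, rfl⟩ := ha
    obtain ⟨j, k, hjk⟩ := sep_idx (hgood.1 q hq).2 (hgood.1 p hp).2 (hgood.2.2 p hp q hq) hap
    refine ⟨C (q.2 j) * X (Sum.inr k) - C (q.2 k) * X (Sum.inr j),
      hom_sub (hom_CX _ _) (hom_CX _ _), ?_, ?_⟩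
    · simpa [evalB] using hjk
    · intro q' hq'
      simp [evalB, hq', mul_comm]
  choose! l hl using h1
  refine ⟨∏ a ∈ (𝕏.image Prod.snd).erase p.2, l a, ?_, ?_, ?_⟩
  · have := IsWeightedHomogeneous.prod ((𝕏.image Prod.snd).erase p.2) l (fun _ => ((0 : ℤ), (1 : ℤ)))
      (fun {a} ha => (hl a ha).1)
    have hc := Finset.card_erase_add_one (Finset.mem_image_of_mem Prod.snd hp)
    rw [Finset.sum_const] at this
    unfold IsBihom
    convert this using 1
    ext <;> simp
    rw [← hc]; push_cast; ring
  · simp only [evalB, map_prod]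
    exact Finset.prod_ne_zero_iff.2 fun a ha => (hl a ha).2.1
  · intro q hq hqp
    simp only [evalB, map_prod]
    have hm : q.2 ∈ (𝕏.image Prod.snd).erase p.2 :=
      Finset.mem_erase.2 ⟨hqp, Finset.mem_image_of_mem _ hq⟩
    exact Finset.prod_eq_zero hm ((hl _ hm).2.2 q rfl)

/-- Separator of a point. -/
theorem sepBoth {𝕏 : Finset (BiPt K m n)} (hgood : GoodConfig K 𝕏) {p : BiPt K m n}
    (hp : p ∈ 𝕏) : ∃ (L : BiRing K m n) (d : ℤ × ℤ), IsBihom K L d ∧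
      evalB K p L ≠ 0 ∧ ∀ q ∈ 𝕏, q ≠ p → evalB K q L = 0 := by
  obtain ⟨L, hL, hLp, hLq⟩ := sepL hgood hp
  obtain ⟨M, hM, hMp, hMq⟩ := sepR hgood hp
  refine ⟨L * M, _, IsWeightedHomogeneous.mul hL hM, ?_, ?_⟩
  · simp only [evalB, map_mul] at *
    exact mul_ne_zero hLp hMp
  · intro q hq hqp
    have : q.1 ≠ p.1 ∨ q.2 ≠ p.2 := by
      by_contra! h; exact hqp (Prod.ext h.1 h.2)
    simp only [evalB, map_mul] at *
    rcases this with h | h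
    · rw [hLq q hq h, zero_mul]
    · rw [hMq q hq h, mul_zero]

theorem x0_ne {𝕏 : Finset (BiPt K m n)} (hgood : GoodConfig K 𝕏) (hACM : ACMxy K 𝕏)
    {p : BiPt K m n} (hp : p ∈ 𝕏) : p.1 0 ≠ 0 := by
  intro h0
  obtain ⟨L, d, hL, hLp, hLq⟩ := sepBoth hgood hp
  apply hLp
  apply vI_eval hp
  rw [← Ideal.Quotient.eq_zero_iff_mem]
  apply hACM.1
  rw [x0B, ← map_mul, Ideal.Quotient.eq_zero_iff_mem]
  refine Ideal.subset_span ⟨⟨_, IsWeightedHomogeneous.mul (isWeightedHomogeneous_X K _ _) hL⟩, ?_⟩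
  intro q hq
  by_cases hqp : q = p
  · subst hqp; simp [evalB, h0]
  · have := hLq q hq hqp
    simp only [evalB, map_mul] at *
    rw [this, mul_zero]

/-- The parametrization of the cone line over the first factor. -/
def phiP (p : BiPt K m n) : BiRing K m n →ₐ[K] Polynomial K :=
  aeval (Sum.elim (fun i => Polynomial.C (p.1 i) * Polynomial.X) (fun j => Polynomial.C (p.2 j)))

theorem phiP_hom (p : BiPt K m n) {F : BiRing K m n} {d : ℤ × ℤ} (hF : IsBihom K F d) :
    phiP p F = Polynomial.C (evalB K p F) * Polynomial.X ^ (d.1.toNat) := by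
  rw [phiP, evalB, aeval_def, eval₂_eq', eval_eq', map_sum, Finset.sum_mul]
  refine Finset.sum_congr rfl fun e he => ?_
  have hw := hF (mem_support_iff.1 he)
  have h1 : d.1 = ((∑ i : Fin (m+1), e (Sum.inl i) : ℕ) : ℤ) := by
    rw [← hw, Finsupp.weight_apply, Finsupp.sum_fintype _ _ (by simp), Fintype.sum_sum_type]
    simp [biwt, Prod.fst_sum]
  rw [h1, Int.toNat_natCast]
  simp only [Fintype.prod_sum_type, Sum.elim_inl, Sum.elim_inr, mul_pow,
    Finset.prod_mul_distrib, map_mul, map_prod, map_pow, Finset.prod_pow_eq_pow_sum,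
    Polynomial.algebraMap_eq]
  ring

theorem phiP_vI {𝕏 : Finset (BiPt K m n)} {p : BiPt K m n} (hp : p ∈ 𝕏) {F : BiRing K m n}
    (hF : F ∈ vIdealB K 𝕏) : phiP p F = 0 := by
  have : vIdealB K 𝕏 ≤ RingHom.ker (phiP p) := by
    refine Ideal.span_le.2 ?_
    rintro G ⟨⟨d, hd⟩, hG⟩
    change phiP p G = 0
    rw [phiP_hom p hd, hG p hp]; simp
  exact this hF

theorem y0_ne {𝕏 : Finset (BiPt K m n)} (hgood : GoodConfig K 𝕏) (hACM : ACMxy K 𝕏)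
    {p : BiPt K m n} (hp : p ∈ 𝕏) : p.2 0 ≠ 0 := by
  intro h0
  obtain ⟨L, d, hL, hLp, hLq⟩ := sepBoth hgood hp
  have key : ∀ k : ℕ, ∀ G : BiRing K m n, X (Sum.inr 0) * G ∈ vIdealB K 𝕏 →
      Polynomial.X ^ k ∣ phiP p G := by
    intro k
    induction k with
    | zero => intro G _; simp
    | succ k ih =>
      intro G hG
      have h1 : Ideal.Quotient.mk (vIdealB K 𝕏) G ∈ Ideal.span {x0B K (vIdealB K 𝕏)} := by
        apply hACM.2
        rw [y0B, ← map_mul, Ideal.Quotient.eq_zero_iff_mem.2 hG]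
        exact Submodule.zero_mem _
      obtain ⟨z, hz⟩ := Ideal.mem_span_singleton'.1 h1
      obtain ⟨G', rfl⟩ := Ideal.Quotient.mk_surjective z
      have hmem : G - G' * X (Sum.inl 0) ∈ vIdealB K 𝕏 := by
        rw [← Ideal.Quotient.eq_zero_iff_mem, map_sub, map_mul, ← hz, x0B, sub_self]
      have hG' : X (Sum.inr 0) * G' ∈ vIdealB K 𝕏 := by
        rw [← Ideal.Quotient.eq_zero_iff_mem]
        apply hACM.1
        rw [x0B, ← map_mul, Ideal.Quotient.eq_zero_iff_mem]
        have := (vIdealB K 𝕏).sub_mem hG ((vIdealB K 𝕏).mul_mem_left (X (Sum.inr 0)) hmem)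
        convert this using 1
        ring
      have e : phiP p G = phiP p G' * (Polynomial.C (p.1 0) * Polynomial.X) := by
        have := phiP_vI hp hmem
        rw [map_sub, map_mul, sub_eq_zero] at this
        rw [this]; simp [phiP]
      rw [e, pow_succ]
      exact mul_dvd_mul (ih G' hG') (Dvd.intro_left _ rfl)
  have hmem : X (Sum.inr 0) * L ∈ vIdealB K 𝕏 := by
    refine Ideal.subset_span ⟨⟨_, IsWeightedHomogeneous.mul (isWeightedHomogeneous_X K _ _) hL⟩, ?_⟩
    intro q hq
    by_cases hqp : q = p
    · subst hqp; simp [evalB, h0]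
    · have := hLq q hq hqp
      simp only [evalB, map_mul] at *
      rw [this, mul_zero]
  have hd := key (d.1.toNat + 1) L hmem
  rw [phiP_hom p hL, Polynomial.X_pow_dvd_iff] at hd
  have := hd d.1.toNat (Nat.lt_succ_self _)
  simp at this
  exact hLp this

/-- Jacobian minors of arbitrary elements of `I` lie in the Kähler different. -/
theorem jac_mem {I : Ideal (BiRing K m n)} {r : ℕ} (H : Fin r → BiRing K m n)
    (hH : Ideal.span (Set.range H) = I) (F : Fin (m+n) → BiRing K m n) (hF : ∀ u, F u ∈ I) :
    Ideal.Quotient.mk I (Matrix.det (Matrix.of fun u v : Fin (m+n) =>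
      pderiv (bvar m n v) (F u))) ∈ kdiffB K I H := by
  have h1 : ∀ u, ∃ a : Fin r → BiRing K m n, ∑ k, a k * H k = F u := by
    intro u
    have := hF u
    rw [← hH] at this
    exact Ideal.mem_span_range_iff_exists_fun.1 this
  choose a ha using h1
  have hHI : ∀ k, Ideal.Quotient.mk I (H k) = 0 := fun k =>
    Ideal.Quotient.eq_zero_iff_mem.2 (hH ▸ Ideal.subset_span ⟨k, rfl⟩)
  rw [RingHom.map_det]
  have h2 : (Ideal.Quotient.mk I).mapMatrix (Matrix.of fun u v : Fin (m+n) =>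
      pderiv (bvar m n v) (F u)) = fun u => ∑ k, (Ideal.Quotient.mk I (a u k)) •
        (fun v => Ideal.Quotient.mk I (pderiv (bvar m n v) (H k))) := by
    funext u v
    simp only [RingHom.mapMatrix_apply, Matrix.map_apply, Matrix.of_apply, Finset.sum_apply,
      Pi.smul_apply, smul_eq_mul]
    rw [← ha u, map_sum, map_sum]
    refine Finset.sum_congr rfl fun k _ => ?_
    rw [Derivation.leibniz]
    simp [hHI]
  rw [h2]
  change (Matrix.detRowAlternating : (Fin (m+n) → BiRing K m n ⧸ I) [⋀^Fin (m+n)]→ₗ[BiRing K m n ⧸ I] _).toMultilinearMap _ ∈ _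
  rw [MultilinearMap.map_sum]
  refine Ideal.sum_mem _ fun ρ _ => ?_
  rw [MultilinearMap.map_smul_univ, smul_eq_mul]
  refine Ideal.mul_mem_left _ _ (Ideal.subset_span ⟨ρ, ?_⟩)
  simp only
  rw [RingHom.map_det]
  rfl

theorem bvar_castAdd (v : Fin m) : bvar m n (Fin.castAdd n v) = Sum.inl v.succ := by
  simp [bvar, Fin.ext_iff]

theorem bvar_natAdd (v : Fin n) : bvar m n (Fin.natAdd m v) = Sum.inr v.succ := by
  simp [bvar, Fin.ext_iff]

theorem bvar_inj : Function.Injective (bvar m n) := by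
  intro u v h
  unfold bvar at h
  split_ifs at h with h1 h2 h2 <;> simp [Fin.ext_iff] at h ⊢ <;> omega

theorem bvar_ne_inl (v : Fin (m+n)) : bvar m n v ≠ Sum.inl 0 := by
  unfold bvar; split_ifs <;> simp [Fin.ext_iff]

theorem bvar_ne_inr (v : Fin (m+n)) : bvar m n v ≠ Sum.inr 0 := by
  unfold bvar; split_ifs <;> simp [Fin.ext_iff]

theorem det_hom (M : Matrix (Fin (m+n)) (Fin (m+n)) (BiRing K m n)) (d w : Fin (m+n) → ℤ × ℤ)
    (h : ∀ u v, IsBihom K (M u v) (d u - w v)) : IsBihom K M.det (∑ u, (d u - w u)) := by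
  rw [Matrix.det_apply]
  refine (weightedHomogeneousSubmodule K (biwt m n) _).sum_mem fun σ _ => ?_
  have h1 : IsWeightedHomogeneous (biwt m n) (∏ i, M (σ i) i) (∑ i, (d (σ i) - w i)) :=
    IsWeightedHomogeneous.prod _ _ _ fun {i} _ => h _ _
  rw [Finset.sum_sub_distrib, Equiv.sum_comp σ d, ← Finset.sum_sub_distrib] at h1
  rcases Int.units_eq_one_or (Equiv.Perm.sign σ) with hs | hs
  · rw [hs, one_smul]; exact h1
  · rw [hs, Units.neg_smul, one_smul]
    exact Submodule.neg_mem _ h1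

/-- For each point there is a bihomogeneous separator lying in the different. -/
theorem diff_sep {𝕏 : Finset (BiPt K m n)} (hgood : GoodConfig K 𝕏) (hACM : ACMxy K 𝕏)
    {r : ℕ} (H : Fin r → BiRing K m n) (hH : Ideal.span (Set.range H) = vIdealB K 𝕏)
    (i j : ℕ) {p : BiPt K m n} (hp : p ∈ 𝕏) :
    ∃ D : BiRing K m n, Ideal.Quotient.mk (vIdealB K 𝕏) D ∈ kdiffB K (vIdealB K 𝕏) H ∧
      IsBihom K D ((i : ℤ) + (m + 1) * (((𝕏.image Prod.fst).card : ℤ) - 1),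
        (j : ℤ) + (n + 1) * (((𝕏.image Prod.snd).card : ℤ) - 1)) ∧
      evalB K p D ≠ 0 ∧ ∀ q ∈ 𝕏, q ≠ p → evalB K q D = 0 := by
  obtain ⟨L, hL, hLp, hLq⟩ := sepL hgood hp
  obtain ⟨M, hM, hMp, hMq⟩ := sepR hgood hp
  have hx := x0_ne hgood hACM hp
  have hy := y0_ne hgood hACM hp
  set e1 : ℤ := ((𝕏.image Prod.fst).card : ℤ) - 1 with he1
  set e2 : ℤ := ((𝕏.image Prod.snd).card : ℤ) - 1 with he2
  let F : Fin (m+n) → BiRing K m n := Fin.append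
    (fun v => (C (p.1 0) * X (Sum.inl v.succ) - C (p.1 v.succ) * X (Sum.inl 0)) * L)
    (fun v => (C (p.2 0) * X (Sum.inr v.succ) - C (p.2 v.succ) * X (Sum.inr 0)) * M)
  let e : Fin (m+n) → ℤ × ℤ := Fin.append (fun _ => (e1, 0)) (fun _ => (0, e2))
  have hFhom : ∀ u, IsBihom K (F u) (biwt m n (bvar m n u) + e u) := by
    intro u
    refine Fin.addCases (fun v => ?_) (fun v => ?_) u
    · simp only [F, e, Fin.append_left, bvar_castAdd]
      exact IsWeightedHomogeneous.mul (hom_sub (hom_CX _ _) (hom_CX _ _)) hL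
    · simp only [F, e, Fin.append_right, bvar_natAdd]
      exact IsWeightedHomogeneous.mul (hom_sub (hom_CX _ _) (hom_CX _ _)) hM
  have hFI : ∀ u, F u ∈ vIdealB K 𝕏 := by
    intro u
    refine Ideal.subset_span ⟨⟨_, hFhom u⟩, fun q hq => ?_⟩
    refine Fin.addCases (fun v => ?_) (fun v => ?_) u
    · simp only [F, Fin.append_left]
      by_cases hqp : q.1 = p.1
      · simp [evalB, hqp, mul_comm]
      · have := hLq q hq hqp
        simp only [evalB, map_mul] at *
        rw [this, mul_zero]
    · simp only [F, Fin.append_right]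
      by_cases hqp : q.2 = p.2
      · simp [evalB, hqp, mul_comm]
      · have := hMq q hq hqp
        simp only [evalB, map_mul] at *
        rw [this, mul_zero]
  let J : Matrix (Fin (m+n)) (Fin (m+n)) (BiRing K m n) :=
    Matrix.of fun u v : Fin (m+n) => pderiv (bvar m n v) (F u)
  have hJhom : IsBihom K J.det (m * e1, n * e2) := by
    have := det_hom J (fun u => biwt m n (bvar m n u) + e u) (fun u => biwt m n (bvar m n u))
      (fun u v => IsWeightedHomogeneous.pderiv (hFhom u) (sub_add_cancel _ _))
    convert this using 1
    simp only [add_sub_cancel_left, e, Fin.sum_univ_add, Fin.append_left, Fin.append_right,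
      Finset.sum_const]
    ext <;> simp
  have hJp : evalB K p J.det ≠ 0 := by
    let g : Fin (m+n) → K := Fin.append (fun _ => p.1 0 * evalB K p L)
      (fun _ => p.2 0 * evalB K p M)
    have : (eval (Sum.elim p.1 p.2) : BiRing K m n →+* K).mapMatrix J = Matrix.diagonal g := by
      ext u w
      simp only [RingHom.mapMatrix_apply, Matrix.map_apply, J, Matrix.of_apply]
      rw [Matrix.diagonal_apply]
      revert w
      refine Fin.addCases (fun v => ?_) (fun v => ?_) u
      · intro w
        simp only [F, g, Fin.append_left]
        rw [Derivation.leibniz, map_sub, Derivation.leibniz, Derivation.leibniz, pderiv_C, pderiv_C,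
          pderiv_X_of_ne (bvar_ne_inl w).symm, ← bvar_castAdd (n := n)]
        by_cases hw : Fin.castAdd n v = w
        · subst hw
          simp [evalB, bvar_castAdd, mul_comm]
        · rw [pderiv_X_of_ne (fun h => hw (bvar_inj h))]
          simp [bvar_castAdd, mul_comm, hw]
      · intro w
        simp only [F, g, Fin.append_right]
        rw [Derivation.leibniz, map_sub, Derivation.leibniz, Derivation.leibniz, pderiv_C, pderiv_C,
          pderiv_X_of_ne (bvar_ne_inr w).symm, ← bvar_natAdd (m := m)]
        by_cases hw : Fin.natAdd m v = w
        · subst hw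
          simp [evalB, bvar_natAdd, mul_comm]
        · rw [pderiv_X_of_ne (fun h => hw (bvar_inj h))]
          simp [bvar_natAdd, mul_comm, hw]
    rw [evalB, RingHom.map_det, this, Matrix.det_diagonal]
    refine Finset.prod_ne_zero_iff.2 fun u _ => ?_
    refine Fin.addCases (fun v => ?_) (fun v => ?_) u
    · simp only [g, Fin.append_left]; exact mul_ne_zero hx hLp
    · simp only [g, Fin.append_right]; exact mul_ne_zero hy hMp
  refine ⟨(L * M * (X (Sum.inl 0) ^ i * X (Sum.inr 0) ^ j)) * J.det, ?_, ?_, ?_, ?_⟩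
  · rw [map_mul]
    exact Ideal.mul_mem_left _ _ (jac_mem H hH F hFI)
  · have := IsWeightedHomogeneous.mul (IsWeightedHomogeneous.mul (IsWeightedHomogeneous.mul hL hM)
      (IsWeightedHomogeneous.mul (hom_pow (isWeightedHomogeneous_X K (biwt m n) (Sum.inl 0)) i)
      (hom_pow (isWeightedHomogeneous_X K (biwt m n) (Sum.inr 0)) j))) hJhom
    unfold IsBihom
    convert this using 1
    ext <;> simp [biwt] <;> ring
  · simp only [evalB, map_mul, map_pow, eval_X, Sum.elim_inl, Sum.elim_inr] at *
    exact mul_ne_zero (mul_ne_zero (mul_ne_zero hLp hMp)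
      (mul_ne_zero (pow_ne_zero _ hx) (pow_ne_zero _ hy))) hJp
  · intro q hq hqp
    have : q.1 ≠ p.1 ∨ q.2 ≠ p.2 := by
      by_contra! h; exact hqp (Prod.ext h.1 h.2)
    simp only [evalB, map_mul] at *
    rcases this with h | h
    · rw [hLq q hq h]; simp
    · rw [hMq q hq h]; simp

/-- Evaluation at the points, as a linear map on the coordinate ring. -/
def evQ (𝕏 : Finset (BiPt K m n)) : (BiRing K m n ⧸ vIdealB K 𝕏) →ₐ[K] (𝕏 → K) :=
  Ideal.Quotient.liftₐ (vIdealB K 𝕏)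
    (AlgHom.pi fun p : 𝕏 => aeval (Sum.elim p.1.1 p.1.2))
    (fun F hF => by
      funext p
      have := vI_eval p.2 hF
      simpa [evalB] using this)

theorem evQ_mk (𝕏 : Finset (BiPt K m n)) (F : BiRing K m n) (p : 𝕏) :
    evQ 𝕏 (Ideal.Quotient.mk (vIdealB K 𝕏) F) p = evalB K p.1 F := by
  change (aeval (Sum.elim p.1.1 p.1.2) : BiRing K m n →ₐ[K] K) F = _
  simp [evalB]

theorem evQ_inj (𝕏 : Finset (BiPt K m n)) (d : ℤ × ℤ) :
    Function.Injective ((evQ 𝕏).toLinearMap.domRestrict (degPieceB K (vIdealB K 𝕏) d)) := by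
  rw [← LinearMap.ker_eq_bot, LinearMap.ker_eq_bot']
  rintro ⟨_, F, hF, rfl⟩ h
  have h' : ∀ p ∈ 𝕏, evalB K p F = 0 := by
    intro p hp
    have := congrFun h ⟨p, hp⟩
    rw [← evQ_mk 𝕏 F ⟨p, hp⟩]
    exact this
  apply Subtype.ext
  exact Ideal.Quotient.eq_zero_iff_mem.2 (Ideal.subset_span ⟨⟨d, hF⟩, h'⟩)

theorem main_aux {𝕏 : Finset (BiPt K m n)} (hgood : GoodConfig K 𝕏) (hACM : ACMxy K 𝕏)
    {r : ℕ} (H : Fin r → BiRing K m n) (hH : Ideal.span (Set.range H) = vIdealB K 𝕏)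
    (i j : ℕ) :
    HFIdealB K (vIdealB K 𝕏) (kdiffB K (vIdealB K 𝕏) H) ((i : ℤ), (j : ℤ)) ≤
        HFB K 𝕏 ((i : ℤ), (j : ℤ)) ∧
      HFB K 𝕏 ((i : ℤ), (j : ℤ)) ≤
        HFIdealB K (vIdealB K 𝕏) (kdiffB K (vIdealB K 𝕏) H)
          ((i : ℤ) + (m + 1) * (((𝕏.image Prod.fst).card : ℤ) - 1),
            (j : ℤ) + (n + 1) * (((𝕏.image Prod.snd).card : ℤ) - 1)) := by
  have hfin : ∀ d, Module.Finite K (degPieceB K (vIdealB K 𝕏) d) := fun d =>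
    Module.Finite.of_injective _ (evQ_inj 𝕏 d)
  refine ⟨Submodule.finrank_mono inf_le_right, ?_⟩
  have h1 : HFB K 𝕏 ((i : ℤ), (j : ℤ)) ≤ Fintype.card 𝕏 := by
    have := LinearMap.finrank_le_finrank_of_injective (evQ_inj 𝕏 ((i : ℤ), (j : ℤ)))
    rwa [Module.finrank_fintype_fun_eq_card] at this
  refine h1.trans ?_
  choose D hD1 hD2 hD3 hD4 using fun p : 𝕏 => diff_sep hgood hACM H hH i j p.2
  set d : ℤ × ℤ := ((i : ℤ) + (m + 1) * (((𝕏.image Prod.fst).card : ℤ) - 1),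
            (j : ℤ) + (n + 1) * (((𝕏.image Prod.snd).card : ℤ) - 1)) with hd
  have : Module.Finite K ↥((Submodule.restrictScalars K (kdiffB K (vIdealB K 𝕏) H)) ⊓
      degPieceB K (vIdealB K 𝕏) d) :=
    Submodule.finiteDimensional_of_le (inf_le_right)
  let b : 𝕏 → ↥((Submodule.restrictScalars K (kdiffB K (vIdealB K 𝕏) H)) ⊓
      degPieceB K (vIdealB K 𝕏) d) := fun p =>
    ⟨Ideal.Quotient.mk (vIdealB K 𝕏) (D p), hD1 p, D p, hD2 p, rfl⟩
  have hli : LinearIndependent K b := by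
    rw [Fintype.linearIndependent_iff]
    intro g hg p
    have h2 := congrArg (fun z => evQ 𝕏 z.1 p) hg
    simp only [Submodule.coe_sum, Submodule.coe_smul, map_sum, map_smul, Finset.sum_apply,
      Pi.smul_apply, smul_eq_mul, b, evQ_mk, ZeroMemClass.coe_zero, map_zero, Pi.zero_apply] at h2
    rw [Finset.sum_eq_single p] at h2
    · exact (mul_eq_zero.1 h2).resolve_right (hD3 p)
    · intro q _ hqp
      rw [hD4 q p.1 p.2 (fun h => hqp (Subtype.ext h.symm)), mul_zero]
    · simp
  exact hli.fintype_card_le_finrank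

end Helpers

end MultiProjPoints

open MultiProjPoints in
/-- Proposition 3.3 (d): for an ACM set `𝕏` of `s` distinct
points, `HF_{ϑ_𝕏}(i,j) ≤ HF_𝕏(i,j) ≤ HF_{ϑ_𝕏}(i+(m+1)(s₁-1), j+(n+1)(s₂-1))`
for all `(i,j) ∈ ℕ²`. -/
theorem statement_6 (K : Type) [Field K] [CharZero K] [DecidableEq K]
    (m n : ℕ) (𝕏 : Finset (BiPt K m n)) (hgood : GoodConfig K 𝕏)
    (hne : 𝕏.Nonempty) (hACM : ACMxy K 𝕏)
    (s₁ s₂ : ℕ) (hs₁ : s₁ = (𝕏.image Prod.fst).card)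
    (hs₂ : s₂ = (𝕏.image Prod.snd).card)
    (r : ℕ) (H : Fin r → BiRing K m n) (hHhom : ∀ k, ∃ d, IsBihom K (H k) d)
    (hHgen : Ideal.span (Set.range H) = vIdealB K 𝕏) :
    ∀ i j : ℕ,
      HFIdealB K (vIdealB K 𝕏) (kdiffB K (vIdealB K 𝕏) H) ((i : ℤ), (j : ℤ)) ≤
        HFB K 𝕏 ((i : ℤ), (j : ℤ)) ∧
      HFB K 𝕏 ((i : ℤ), (j : ℤ)) ≤
        HFIdealB K (vIdealB K 𝕏) (kdiffB K (vIdealB K 𝕏) H)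
          ((i : ℤ) + (m + 1) * ((s₁ : ℤ) - 1), (j : ℤ) + (n + 1) * ((s₂ : ℤ) - 1)) := by
  subst hs₁ hs₂
  exact fun i j => main_aux hgood hACM H hHgen i j
end
end

section
/- Let X be an ACM set of s distinct points in P^m × P^n with s_1 = |X_1| and s_2 = |X_2|. Then HF_{ϑ_X}(i,j) = s for all (i,j) ⪰ ((s_1−1)(m+2), (s_2−1)(n+2)). -/
/- Common setup: finite sets of points in the multiprojective space
   `P^m x P^n` over a field `K` of characteristic zero, their bihomogeneous
   vanishing ideals, bigraded Hilbert functions, Kähler differents,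
   separators, Cayley-Bacharach property and complete intersections. -/

open MvPolynomial

set_option maxHeartbeats 1000000
set_option synthInstance.maxHeartbeats 400000

noncomputable section

namespace MultiProjPoints

lemma aux_lin {K : Type} [Field K] {N : ℕ} (p q : Fin (N+1) → K) (hp : p ≠ 0) (hq : q ≠ 0)
    (h : ¬ ∃ c : K, c ≠ 0 ∧ p = c • q) : ∃ a b, q a * p b - q b * p a ≠ 0 := by
  by_contra hcon
  push Not at hcon
  obtain ⟨a, ha⟩ := Function.ne_iff.mp hq
  simp only [Pi.zero_apply] at ha
  have key : p = (p a / q a) • q := by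
    funext b
    have := hcon a b
    simp only [Pi.smul_apply, smul_eq_mul]
    field_simp
    linear_combination this
  refine h ⟨p a / q a, ?_, key⟩
  intro h0
  rw [h0, zero_smul] at key
  exact hp key

lemma aux_sep {K : Type} [Field K] [DecidableEq K] {N : ℕ} {σ : Type} (f : Fin (N+1) → σ)
    (w : σ → ℤ × ℤ) (δ : ℤ × ℤ) (hw : ∀ i, w (f i) = δ) (Y : Finset (Fin (N+1) → K))
    (p : Fin (N+1) → K) (hpY : p ∈ Y) (h0 : ∀ q ∈ Y, q ≠ 0)
    (hgood : ∀ q ∈ Y, q ≠ p → ¬ ∃ c : K, c ≠ 0 ∧ p = c • q) :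
    ∃ S : MvPolynomial σ K, IsWeightedHomogeneous w S ((Y.card - 1) • δ) ∧
      (∀ x : σ → K, (fun i => x (f i)) = p → eval x S ≠ 0) ∧
      (∀ q ∈ Y, q ≠ p → ∀ x : σ → K, (fun i => x (f i)) = q → eval x S = 0) := by
  have hex : ∀ q : Fin (N+1) → K, ∃ ab : Fin (N+1) × Fin (N+1), q ∈ Y → q ≠ p →
      q ab.1 * p ab.2 - q ab.2 * p ab.1 ≠ 0 := by
    intro q
    by_cases hq : q ∈ Y ∧ q ≠ p
    · obtain ⟨a, b, hab⟩ := aux_lin p q (h0 p hpY) (h0 q hq.1) (hgood q hq.1 hq.2)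
      exact ⟨(a, b), fun _ _ => hab⟩
    · exact ⟨(0, 0), fun h1 h2 => absurd ⟨h1, h2⟩ hq⟩
  choose ab hab using hex
  refine ⟨∏ q ∈ Y.erase p, (C (q (ab q).1) * X (f (ab q).2) - C (q (ab q).2) * X (f (ab q).1)),
    ?_, ?_, ?_⟩
  · have := IsWeightedHomogeneous.prod (w := w) (Y.erase p)
      (fun q => (C (q (ab q).1) * X (f (ab q).2) - C (q (ab q).2) * X (f (ab q).1) :
        MvPolynomial σ K)) (fun _ => δ) (by
        intro q _
        have hX : ∀ i, IsWeightedHomogeneous w (X (f i) : MvPolynomial σ K) δ := by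
          intro i
          have := isWeightedHomogeneous_X K w (f i)
          rwa [hw] at this
        exact ((hX _).C_mul _).sub ((hX _).C_mul _))
    rwa [Finset.sum_const, Finset.card_erase_of_mem hpY] at this
  · intro x hx
    rw [map_prod, Finset.prod_ne_zero_iff]
    intro q hq
    have := hab q (Finset.mem_of_mem_erase hq) (Finset.ne_of_mem_erase hq)
    simpa [← hx] using this
  · intro q hq hqp x hx
    rw [map_prod]
    refine Finset.prod_eq_zero (Finset.mem_erase.mpr ⟨hqp, hq⟩) ?_
    simp [← hx]
    ring

lemma aux_reg {A : Type} [CommRing A] {a b : A} (h : RegPair a b) {z : A} (hz : b * z = 0)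
    (k : ℕ) : ∃ w, z = a ^ k * w ∧ b * w = 0 := by
  induction k with
  | zero => exact ⟨z, by simp, hz⟩
  | succ k ih =>
    obtain ⟨w, h1, h2⟩ := ih
    have : w ∈ Ideal.span {a} := h.2 w (by rw [h2]; exact zero_mem _)
    obtain ⟨v, hv⟩ := Ideal.mem_span_singleton'.mp this
    refine ⟨v, by rw [h1, ← hv]; ring, h.1 _ ?_⟩
    rw [← h2, ← hv]; ring

/-- Scaling the first block of coordinates by a parameter. -/
def scl {K : Type} [Field K] {m n : ℕ} (p : BiPt K m n) :
    BiRing K m n →ₐ[K] Polynomial K :=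
  aeval (Sum.elim (fun i => Polynomial.C (p.1 i) * Polynomial.X) (fun j => Polynomial.C (p.2 j)))

lemma scl_hom {K : Type} [Field K] {m n : ℕ} (p : BiPt K m n) (F : BiRing K m n) (d : ℤ × ℤ)
    (hF : IsBihom K F d) :
    scl p F = Polynomial.C (evalB K p F) * Polynomial.X ^ d.1.toNat := by
  unfold evalB scl
  rw [aeval_def, eval₂_eq', eval_eq', map_sum, Finset.sum_mul]
  refine Finset.sum_congr rfl fun c hc => ?_
  have hw := hF (mem_support_iff.mp hc)
  have h1 : (∑ i : Fin (m+1), (c (Sum.inl i) : ℤ)) = d.1 := by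
    rw [← hw, Finsupp.weight_apply, Finsupp.sum_fintype _ _ (by simp)]
    simp [biwt, Fintype.sum_sum_type, Prod.fst_sum]
  have h2 : d.1.toNat = ∑ i : Fin (m+1), c (Sum.inl i) := by
    rw [← h1]; norm_cast
  rw [h2, Fintype.prod_sum_type, Fintype.prod_sum_type]
  simp only [Sum.elim_inl, Sum.elim_inr, mul_pow, Finset.prod_mul_distrib, map_mul, map_prod,
    map_pow, Finset.prod_pow_eq_pow_sum, Polynomial.algebraMap_eq]
  ring

lemma evalB_vIdeal {K : Type} [Field K] {m n : ℕ} (𝕏 : Finset (BiPt K m n)) {F : BiRing K m n}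
    (hF : F ∈ vIdealB K 𝕏) {p : BiPt K m n} (hp : p ∈ 𝕏) : evalB K p F = 0 := by
  have : vIdealB K 𝕏 ≤ RingHom.ker (eval (Sum.elim p.1 p.2)) := by
    refine Ideal.span_le.mpr ?_
    rintro G ⟨_, hG⟩
    exact hG p hp
  exact this hF

lemma scl_vIdeal {K : Type} [Field K] {m n : ℕ} (𝕏 : Finset (BiPt K m n)) {F : BiRing K m n}
    (hF : F ∈ vIdealB K 𝕏) {p : BiPt K m n} (hp : p ∈ 𝕏) : scl p F = 0 := by
  have : vIdealB K 𝕏 ≤ RingHom.ker (scl p).toRingHom := by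
    refine Ideal.span_le.mpr ?_
    rintro G ⟨⟨d, hd⟩, hG⟩
    change scl p G = 0
    rw [scl_hom p G d hd, hG p hp]
    simp
  exact this hF

lemma vIdeal_of {K : Type} [Field K] {m n : ℕ} (𝕏 : Finset (BiPt K m n)) {F : BiRing K m n}
    {d : ℤ × ℤ} (hd : IsBihom K F d) (h : ∀ p ∈ 𝕏, evalB K p F = 0) : F ∈ vIdealB K 𝕏 :=
  Ideal.subset_span ⟨⟨d, hd⟩, h⟩

/-- The base variable belonging to `bvar`. -/
def bbase (m n : ℕ) (v : Fin (m+n)) : Fin (m+1) ⊕ Fin (n+1) :=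
  if (v : ℕ) < m then Sum.inl 0 else Sum.inr 0

lemma bvar_inj_s7 (m n : ℕ) {u v : Fin (m+n)} (h : bvar m n u = bvar m n v) : u = v := by
  unfold bvar at h
  ext
  split_ifs at h with h1 h2 h2
  · simpa using h
  · have h3 := Sum.inr.inj h
    simp only [Fin.mk.injEq] at h3
    omega

lemma bvar_ne_bbase (m n : ℕ) (u v : Fin (m+n)) : bvar m n u ≠ bbase m n v := by
  unfold bvar bbase
  split_ifs <;> simp [Fin.ext_iff]

lemma biwt_bbase (m n : ℕ) (v : Fin (m+n)) : biwt m n (bbase m n v) = biwt m n (bvar m n v) := by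
  unfold bvar bbase
  split_ifs <;> simp [biwt]

lemma kdiff_mem {K : Type} [Field K] {m n r : ℕ} (I : Ideal (BiRing K m n))
    (H : Fin r → BiRing K m n) (hH : Ideal.span (Set.range H) = I)
    (G : Fin (m+n) → BiRing K m n) (hG : ∀ u, G u ∈ I) :
    Ideal.Quotient.mk I (Matrix.det (Matrix.of fun u v : Fin (m+n) =>
      pderiv (bvar m n v) (G u))) ∈ kdiffB K I H := by
  have hHI : ∀ k, H k ∈ I := fun k => hH ▸ Ideal.subset_span ⟨k, rfl⟩
  have hc : ∀ u, ∃ c : Fin r → BiRing K m n, ∑ k, c k * H k = G u := by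
    intro u
    have := hG u
    rw [← hH] at this
    exact Ideal.mem_span_range_iff_exists_fun.mp this
  choose c hc using hc
  rw [RingHom.map_det]
  have hM : (Ideal.Quotient.mk I).mapMatrix (Matrix.of fun u v : Fin (m+n) =>
      pderiv (bvar m n v) (G u)) = fun u => ∑ k, Ideal.Quotient.mk I (c u k) •
        (fun v => Ideal.Quotient.mk I (pderiv (bvar m n v) (H k))) := by
    funext u v
    simp only [RingHom.mapMatrix_apply, Matrix.map_apply, Matrix.of_apply, Finset.sum_apply,
      Pi.smul_apply, smul_eq_mul]
    rw [← hc u, map_sum, map_sum]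
    refine Finset.sum_congr rfl fun k _ => ?_
    rw [Derivation.leibniz, map_add, smul_eq_mul, smul_eq_mul, map_mul, map_mul,
      Ideal.Quotient.eq_zero_iff_mem.mpr (hHI k), zero_mul, add_zero]
  rw [hM]
  have := (Matrix.detRowAlternating (n := Fin (m+n)) (R := BiRing K m n ⧸ I)).toMultilinearMap.map_sum
    (fun u k => Ideal.Quotient.mk I (c u k) •
        (fun v => Ideal.Quotient.mk I (pderiv (bvar m n v) (H k))))
  refine (congrArg (· ∈ kdiffB K I H) this).mpr ?_
  refine Ideal.sum_mem _ fun ρ _ => ?_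
  rw [MultilinearMap.map_smul_univ, smul_eq_mul]
  refine Ideal.mul_mem_left _ _ (Ideal.subset_span ⟨ρ, ?_⟩)
  simp only []
  rw [RingHom.map_det]
  rfl

lemma hom_det {K : Type} [Field K] {m n : ℕ} (G : Fin (m+n) → BiRing K m n)
    (e : Fin (m+n) → ℤ × ℤ) (hG : ∀ u, IsBihom K (G u) (e u + biwt m n (bvar m n u))) :
    IsBihom K (Matrix.det (Matrix.of fun u v : Fin (m+n) => pderiv (bvar m n v) (G u)))
      (∑ u, e u) := by
  unfold IsBihom
  rw [Matrix.det_apply]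
  refine IsWeightedHomogeneous.sum _ _ _ fun τ _ => ?_
  have h : IsWeightedHomogeneous (biwt m n)
      (∏ u, pderiv (bvar m n u) (G (τ u))) (∑ u, e u) := by
    have := IsWeightedHomogeneous.prod (w := biwt m n) Finset.univ
      (fun u => pderiv (bvar m n u) (G (τ u)))
      (fun u => e (τ u) + biwt m n (bvar m n (τ u)) - biwt m n (bvar m n u))
      (fun u _ => IsWeightedHomogeneous.pderiv (hG (τ u)) (by abel))
    convert this using 1
    rw [Finset.sum_sub_distrib, Finset.sum_add_distrib, Equiv.sum_comp τ e,
      Equiv.sum_comp τ (fun u => biwt m n (bvar m n u))]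
    abel
  rcases Int.units_eq_one_or (Equiv.Perm.sign τ) with hs | hs
  · rw [hs, one_smul]; exact h
  · rw [hs, Units.neg_smul, one_smul]; exact h.neg

end MultiProjPoints

namespace MultiProjPoints

/-- Evaluation at all the points of `𝕏`, on the coordinate ring. -/
def evAll {K : Type} [Field K] {m n : ℕ} (𝕏 : Finset (BiPt K m n)) :
    (BiRing K m n ⧸ vIdealB K 𝕏) →ₗ[K] (𝕏 → K) :=
  LinearMap.pi fun p => (Ideal.Quotient.liftₐ (vIdealB K 𝕏) (aeval (Sum.elim p.1.1 p.1.2))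
    (fun F hF => by
      have h := evalB_vIdeal 𝕏 hF p.2
      rw [evalB] at h
      rw [← h]; rfl)).toLinearMap

lemma evAll_mk {K : Type} [Field K] {m n : ℕ} (𝕏 : Finset (BiPt K m n)) (F : BiRing K m n)
    (p : 𝕏) : evAll 𝕏 (Ideal.Quotient.mk (vIdealB K 𝕏) F) p = evalB K p.1 F := by
  change aeval (Sum.elim p.1.1 p.1.2) F = _
  rfl

lemma finrank_aux {K : Type} [Field K] {m n : ℕ} (𝕏 : Finset (BiPt K m n))
    (J : Ideal (BiRing K m n ⧸ vIdealB K 𝕏)) (d : ℤ × ℤ)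
    (h : ∀ p ∈ 𝕏, ∃ E : BiRing K m n, IsBihom K E d ∧ Ideal.Quotient.mk _ E ∈ J ∧
      evalB K p E ≠ 0 ∧ ∀ q ∈ 𝕏, q ≠ p → evalB K q E = 0) :
    HFIdealB K (vIdealB K 𝕏) J d = 𝕏.card := by
  classical
  unfold HFIdealB
  set W : Submodule K (BiRing K m n ⧸ vIdealB K 𝕏) :=
    (Submodule.restrictScalars K J) ⊓ degPieceB K (vIdealB K 𝕏) d with hW
  have hinj : Function.Injective ((evAll 𝕏).domRestrict W) := by
    rw [← LinearMap.ker_eq_bot, LinearMap.ker_eq_bot']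
    rintro ⟨x, hx⟩ hx0
    obtain ⟨F, hF, rfl⟩ := hx.2
    have hF' : F ∈ vIdealB K 𝕏 := vIdeal_of 𝕏 (d := d) hF fun p hp => by
      have := congrFun hx0 ⟨p, hp⟩
      rwa [LinearMap.domRestrict_apply] at this
    exact Subtype.ext (Ideal.Quotient.eq_zero_iff_mem.mpr hF')
  have hsurj : Function.Surjective ((evAll 𝕏).domRestrict W) := by
    rw [← LinearMap.range_eq_top, eq_top_iff, ← (Pi.basisFun K 𝕏).span_eq, Submodule.span_le]
    rintro _ ⟨p, rfl⟩
    obtain ⟨E, h1, h2, h3, h4⟩ := h p.1 p.2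
    have hE : Ideal.Quotient.mk (vIdealB K 𝕏) E ∈ W := ⟨h2, ⟨E, h1, rfl⟩⟩
    have : (evAll 𝕏).domRestrict W ((evalB K p.1 E)⁻¹ • ⟨_, hE⟩) = Pi.basisFun K 𝕏 p := by
      rw [map_smul, LinearMap.domRestrict_apply]
      funext q
      rw [Pi.smul_apply, evAll_mk, Pi.basisFun_apply, smul_eq_mul]
      by_cases hq : q = p
      · subst hq; simp [h3]
      · rw [h4 q.1 q.2 (fun h => hq (Subtype.ext h)), Pi.single_eq_of_ne hq, mul_zero]
    exact ⟨_, this⟩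
  rw [(LinearEquiv.ofBijective _ ⟨hinj, hsurj⟩).finrank_eq]
  simp

lemma main_aux_s7 {K : Type} [Field K] [DecidableEq K]
    (m n : ℕ) (𝕏 : Finset (BiPt K m n)) (hgood : GoodConfig K 𝕏) (hACM : ACMxy K 𝕏)
    (r : ℕ) (H : Fin r → BiRing K m n)
    (hHgen : Ideal.span (Set.range H) = vIdealB K 𝕏) (i j : ℤ)
    (hi : (((𝕏.image Prod.fst).card : ℤ) - 1) * (m + 2) ≤ i)
    (hj : (((𝕏.image Prod.snd).card : ℤ) - 1) * (n + 2) ≤ j)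
    (p : BiPt K m n) (hp : p ∈ 𝕏) :
    ∃ E : BiRing K m n, IsBihom K E (i, j) ∧
      Ideal.Quotient.mk _ E ∈ kdiffB K (vIdealB K 𝕏) H ∧
      evalB K p E ≠ 0 ∧ ∀ q ∈ 𝕏, q ≠ p → evalB K q E = 0 := by
  obtain ⟨g0, g1, g2⟩ := hgood
  have hp1 : p.1 ∈ 𝕏.image Prod.fst := Finset.mem_image_of_mem _ hp
  have hp2 : p.2 ∈ 𝕏.image Prod.snd := Finset.mem_image_of_mem _ hp
  obtain ⟨S, hS, hSp, hSq⟩ := aux_sep (Sum.inl : Fin (m+1) → Fin (m+1) ⊕ Fin (n+1)) (biwt m n)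
    (1, 0) (by simp [biwt]) (𝕏.image Prod.fst) p.1 hp1
    (by
      intro q hq
      obtain ⟨q', hq', rfl⟩ := Finset.mem_image.mp hq
      exact (g0 q' hq').1)
    (by
      intro q hq hne hc
      obtain ⟨q', hq', rfl⟩ := Finset.mem_image.mp hq
      exact hne (g1 p hp q' hq' hc).symm)
  obtain ⟨T, hT, hTp, hTq⟩ := aux_sep (Sum.inr : Fin (n+1) → Fin (m+1) ⊕ Fin (n+1)) (biwt m n)
    (0, 1) (by simp [biwt]) (𝕏.image Prod.snd) p.2 hp2
    (by
      intro q hq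
      obtain ⟨q', hq', rfl⟩ := Finset.mem_image.mp hq
      exact (g0 q' hq').2)
    (by
      intro q hq hne hc
      obtain ⟨q', hq', rfl⟩ := Finset.mem_image.mp hq
      exact hne (g2 p hp q' hq' hc).symm)
  have hs1 : 1 ≤ (𝕏.image Prod.fst).card := Finset.card_pos.mpr ⟨_, hp1⟩
  have hs2 : 1 ≤ (𝕏.image Prod.snd).card := Finset.card_pos.mpr ⟨_, hp2⟩
  obtain ⟨a, ha⟩ : ∃ a, (𝕏.image Prod.fst).card = a + 1 := ⟨_, (Nat.sub_add_cancel hs1).symm⟩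
  obtain ⟨b, hb⟩ : ∃ b, (𝕏.image Prod.snd).card = b + 1 := ⟨_, (Nat.sub_add_cancel hs2).symm⟩
  rw [ha] at hS hi
  rw [hb] at hT hj
  simp only [Nat.add_sub_cancel] at hS hT
  push_cast at hi hj
  -- evaluation facts
  have eSp : evalB K p S ≠ 0 := hSp _ rfl
  have eTp : evalB K p T ≠ 0 := hTp _ rfl
  have eSq : ∀ q ∈ 𝕏, q.1 ≠ p.1 → evalB K q S = 0 := fun q hq hne =>
    hSq q.1 (Finset.mem_image_of_mem _ hq) hne _ rfl
  have eTq : ∀ q ∈ 𝕏, q.2 ≠ p.2 → evalB K q T = 0 := fun q hq hne =>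
    hTq q.2 (Finset.mem_image_of_mem _ hq) hne _ rfl
  have emul : ∀ (q : BiPt K m n) (F G : BiRing K m n),
      evalB K q (F * G) = evalB K q F * evalB K q G := fun q F G => map_mul _ _ _
  have eSTq : ∀ q ∈ 𝕏, q ≠ p → evalB K q (S * T) = 0 := by
    intro q hq hne
    rw [emul]
    by_cases h1 : q.1 = p.1
    · rw [eTq q hq (fun h2 => hne (Prod.ext h1 h2)), mul_zero]
    · rw [eSq q hq h1, zero_mul]
  have hST : IsBihom K (S * T) (a • ((1 : ℤ), (0 : ℤ)) + b • ((0 : ℤ), (1 : ℤ))) := hS.mul hT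
  have hX0 : ∀ v, IsBihom K (X v : BiRing K m n) (biwt m n v) := fun v =>
    isWeightedHomogeneous_X K _ v
  -- x₀ and y₀ do not vanish at p
  have vanish : ∀ v, evalB K p (X v) = 0 →
      Ideal.Quotient.mk (vIdealB K 𝕏) (X v) * Ideal.Quotient.mk (vIdealB K 𝕏) (S * T) = 0 := by
    intro v hv
    rw [← map_mul, Ideal.Quotient.eq_zero_iff_mem]
    refine vIdeal_of 𝕏 ((hX0 v).mul hST) fun q hq => ?_
    rw [emul]
    by_cases h : q = p
    · rw [h, hv, zero_mul]
    · rw [eSTq q hq h, mul_zero]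
  have eSTp : evalB K p (S * T) ≠ 0 := by rw [emul]; exact mul_ne_zero eSp eTp
  have hx0 : p.1 0 ≠ 0 := by
    intro h0
    have := hACM.1 _ (vanish (Sum.inl 0) (by simp [evalB, h0]))
    exact eSTp (evalB_vIdeal 𝕏 (Ideal.Quotient.eq_zero_iff_mem.mp this) hp)
  have hy0 : p.2 0 ≠ 0 := by
    intro h0
    obtain ⟨w, hw, -⟩ := aux_reg hACM (vanish (Sum.inr 0) (by simp [evalB, h0])) (a + 1)
    obtain ⟨G, rfl⟩ := Ideal.Quotient.mk_surjective w
    rw [x0B, ← map_pow, ← map_mul, Ideal.Quotient.eq] at hw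
    have h1 := scl_vIdeal 𝕏 hw hp
    rw [map_sub, scl_hom p _ _ hST, map_mul, map_pow, sub_eq_zero] at h1
    have h2 : scl p (X (Sum.inl 0)) = Polynomial.C (p.1 0) * Polynomial.X := by
      simp [scl]
    rw [h2] at h1
    have h3 := congrArg (fun f => Polynomial.coeff f a) h1
    have h4 : (Polynomial.C (p.1 0) * Polynomial.X) ^ (a + 1) * scl p G =
        Polynomial.X ^ (a + 1) * (Polynomial.C (p.1 0) ^ (a + 1) * scl p G) := by ring
    simp only [h4, Polynomial.coeff_X_pow_mul'] at h3
    simp [Polynomial.coeff_X_pow] at h3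
    exact eSTp h3
  -- the polynomials whose Jacobian we use
  set P : Fin (m+1) ⊕ Fin (n+1) → K := Sum.elim p.1 p.2 with hP
  set L : Fin (m+n) → BiRing K m n := fun v =>
    C (P (bbase m n v)) * X (bvar m n v) - C (P (bvar m n v)) * X (bbase m n v) with hL
  set U : Fin (m+n) → BiRing K m n := fun v => if (v : ℕ) < m then S else T with hU
  set e : Fin (m+n) → ℤ × ℤ := fun v => if (v : ℕ) < m then ((a : ℤ), 0) else (0, (b : ℤ)) with he
  have hLhom : ∀ v, IsBihom K (L v) (biwt m n (bvar m n v)) := by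
    intro v
    have h1 := hX0 (bbase m n v)
    rw [biwt_bbase] at h1
    exact (IsWeightedHomogeneous.C_mul (hX0 (bvar m n v)) _).sub
      (IsWeightedHomogeneous.C_mul h1 _)
  have hUhom : ∀ v, IsBihom K (U v) (e v) := by
    intro v
    by_cases hv : (v : ℕ) < m
    · simp only [hU, he, if_pos hv]
      simpa [IsBihom] using hS
    · simp only [hU, he, if_neg hv]
      simpa [IsBihom] using hT
  have hbase : ∀ v, P (bbase m n v) ≠ 0 := by
    intro v
    simp only [bbase]
    split_ifs
    · exact hx0
    · exact hy0
  have hUp : ∀ v, eval P (U v) ≠ 0 := by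
    intro v
    simp only [hU]
    split_ifs
    · exact eSp
    · exact eTp
  have hLp : ∀ v, eval P (L v) = 0 := by
    intro v
    simp [hL]
    ring
  set G : Fin (m+n) → BiRing K m n := fun v => U v * L v with hGdef
  have hGhom : ∀ v, IsBihom K (G v) (e v + biwt m n (bvar m n v)) := fun v =>
    (hUhom v).mul (hLhom v)
  have hGI : ∀ v, G v ∈ vIdealB K 𝕏 := by
    intro v
    refine vIdeal_of 𝕏 (hGhom v) fun q hq => ?_
    simp only [hGdef]
    rw [emul]
    by_cases hv : (v : ℕ) < m
    · by_cases h1 : q.1 = p.1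
      · have : evalB K q (L v) = 0 := by
          simp [hL, evalB, bbase, bvar, hv, hP, h1]
          ring
        rw [this, mul_zero]
      · simp only [hU, if_pos hv, eSq q hq h1, zero_mul]
    · by_cases h1 : q.2 = p.2
      · have : evalB K q (L v) = 0 := by
          simp [hL, evalB, bbase, bvar, hv, hP, h1]
          ring
        rw [this, mul_zero]
      · simp only [hU, if_neg hv, eTq q hq h1, zero_mul]
  set D : BiRing K m n := Matrix.det (Matrix.of fun u v : Fin (m+n) =>
      pderiv (bvar m n v) (G u)) with hD
  have hDJ : Ideal.Quotient.mk (vIdealB K 𝕏) D ∈ kdiffB K (vIdealB K 𝕏) H :=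
    kdiff_mem _ H hHgen G hGI
  have hDhom : IsBihom K D (∑ u, e u) := hom_det G e hGhom
  have hsum : ∑ u, e u = ((m : ℤ) * a, (n : ℤ) * b) := by
    rw [Fin.sum_univ_add]
    simp [he]
  have hDp : evalB K p D ≠ 0 := by
    have : evalB K p D = Matrix.det (Matrix.diagonal fun u =>
        eval P (U u) * P (bbase m n u)) := by
      change eval P D = _
      rw [hD, RingHom.map_det]
      congr 1
      ext u v
      simp only [RingHom.mapMatrix_apply, Matrix.map_apply, Matrix.of_apply, hGdef,
        Derivation.leibniz, smul_eq_mul, map_add, map_mul, hLp, zero_mul, add_zero,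
        Matrix.diagonal_apply]
      have hd : pderiv (bvar m n v) (L u) = if u = v then C (P (bbase m n u)) else 0 := by
        simp only [hL, map_sub, Derivation.leibniz, pderiv_C, smul_eq_mul, mul_zero, add_zero]
        rw [pderiv_X_of_ne (bvar_ne_bbase m n v u).symm, mul_zero, sub_zero]
        split_ifs with h
        · rw [h, pderiv_X_self, mul_one]
        · rw [pderiv_X_of_ne (fun h' => h (bvar_inj_s7 m n h')), mul_zero]
      rw [hd]
      split_ifs <;> simp
    rw [this, Matrix.det_diagonal, Finset.prod_ne_zero_iff]
    exact fun u _ => mul_ne_zero (hUp u) (hbase u)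
  have ha0 : (0 : ℤ) ≤ a := Int.natCast_nonneg a
  have hb0 : (0 : ℤ) ≤ b := Int.natCast_nonneg b
  obtain ⟨α, hα⟩ : ∃ α : ℕ, i = m * a + a + α :=
    ⟨(i - (m * a + a)).toNat, by rw [Int.toNat_of_nonneg (by linarith)]; ring⟩
  obtain ⟨β, hβ⟩ : ∃ β : ℕ, j = n * b + b + β :=
    ⟨(j - (n * b + b)).toNat, by rw [Int.toNat_of_nonneg (by linarith)]; ring⟩
  refine ⟨X (Sum.inl 0) ^ α * X (Sum.inr 0) ^ β * (S * T) * D, ?_, ?_, ?_, ?_⟩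
  · have h := ((((hX0 (Sum.inl 0)).pow α).mul ((hX0 (Sum.inr 0)).pow β)).mul hST).mul hDhom
    unfold IsBihom
    convert h using 1
    rw [hsum, hα, hβ]
    ext <;> simp [biwt] <;> ring
  · rw [map_mul]
    exact Ideal.mul_mem_left _ _ hDJ
  · rw [emul, emul, emul]
    refine mul_ne_zero (mul_ne_zero (mul_ne_zero ?_ ?_) eSTp) hDp
    · simp [evalB, hx0]
    · simp [evalB, hy0]
  · intro q hq hne
    rw [emul, emul, eSTq q hq hne, mul_zero, zero_mul]

end MultiProjPoints

open MultiProjPoints in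
/-- Corollary 3.4: `HF_{ϑ_𝕏}(i,j) = s` for all
`(i,j) ⪰ ((s₁-1)(m+2), (s₂-1)(n+2))`. -/
theorem statement_7 (K : Type) [Field K] [CharZero K] [DecidableEq K]
    (m n : ℕ) (𝕏 : Finset (BiPt K m n)) (hgood : GoodConfig K 𝕏)
    (hne : 𝕏.Nonempty) (hACM : ACMxy K 𝕏)
    (s s₁ s₂ : ℕ) (hs : s = 𝕏.card) (hs₁ : s₁ = (𝕏.image Prod.fst).card)
    (hs₂ : s₂ = (𝕏.image Prod.snd).card)
    (r : ℕ) (H : Fin r → BiRing K m n) (hHhom : ∀ k, ∃ d, IsBihom K (H k) d)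
    (hHgen : Ideal.span (Set.range H) = vIdealB K 𝕏) :
    ∀ i j : ℤ, ((s₁ : ℤ) - 1) * (m + 2) ≤ i → ((s₂ : ℤ) - 1) * (n + 2) ≤ j →
      HFIdealB K (vIdealB K 𝕏) (kdiffB K (vIdealB K 𝕏) H) (i, j) = s := by
  intro i j hi hj
  subst hs hs₁ hs₂
  exact finrank_aux 𝕏 _ _ fun p hp =>
    main_aux_s7 m n 𝕏 hgood hACM r H hHgen i j hi hj p hp
end
end

section
/- Let X be an ACM set of distinct points in P^m × P^n, let {h_1,...,h_t} be a bihomogeneous minimal system of generators of ϑ_X with deg(h_k) = (i_k, j_k), and set i_max = max{i_1,...,i_t}, j_max = max{j_1,...,j_t}. Let (i,j) ∈ N^2. Then: (a) if i ≥ i_max and HF_{ϑ_X}(i,j) = HF_{ϑ_X}(i+1,j), then HF_{ϑ_X}(i,j) = HF_{ϑ_X}(i+2,j); (b) if j ≥ j_max and HF_{ϑ_X}(i,j) = HF_{ϑ_X}(i,j+1), then HF_{ϑ_X}(i,j) = HF_{ϑ_X}(i,j+2). -/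
/- Common setup: finite sets of points in the multiprojective space
   `P^m x P^n` over a field `K` of characteristic zero, their bihomogeneous
   vanishing ideals, bigraded Hilbert functions, Kähler differents,
   separators, Cayley-Bacharach property and complete intersections. -/

open MvPolynomial

set_option maxHeartbeats 1000000
set_option synthInstance.maxHeartbeats 400000

noncomputable section

namespace MultiProjPoints

section Aux

variable {K : Type} [Field K] {m n : ℕ}

/-- Components of an element of an ideal generated by bihomogeneous elements. -/
lemma aux_comp_mem (s : Set (BiRing K m n)) (hs : ∀ F ∈ s, ∃ d, IsBihom K F d)
    (F : BiRing K m n) (hF : F ∈ Ideal.span s) (d : ℤ × ℤ) :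
    weightedHomogeneousComponent (biwt m n) d F ∈ Ideal.span s := by
  letI := weightedGradedAlgebra K (biwt m n)
  refine weightedHomogeneousComponent_mem_of_mem K (biwt m n) ?_ hF d
  refine Ideal.homogeneous_span _ _ ?_
  intro x hx
  obtain ⟨d, hd⟩ := hs x hx
  exact ⟨d, hd⟩

lemma aux_comp_mul (A B : BiRing K m n) (c d : ℤ × ℤ) (hB : IsBihom K B d) :
    weightedHomogeneousComponent (biwt m n) c (A * B) =
      weightedHomogeneousComponent (biwt m n) (c - d) A * B := by
  letI := weightedGradedAlgebra K (biwt m n)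
  have := DirectSum.coe_decompose_mul_add_of_right_mem
    (weightedHomogeneousSubmodule K (biwt m n)) (i := c - d) (a := A) (b := B) (j := d) hB
  rw [sub_add_cancel] at this
  have h1 := weightedDecomposition.decompose'_apply K (biwt m n) (A * B) c
  have h2 := weightedDecomposition.decompose'_apply K (biwt m n) A (c - d)
  rw [← h1, ← h2]
  exact this

lemma aux_weight (s : (Fin (m+1) ⊕ Fin (n+1)) →₀ ℕ) :
    (Finsupp.weight (biwt m n) s).1 + (Finsupp.weight (biwt m n) s).2 = (s.degree : ℤ) := by
  rw [Finsupp.weight_apply, Finsupp.sum_fintype _ _ (by simp), Finsupp.degree_eq_sum]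
  simp [biwt, Fintype.sum_sum_type, Prod.fst_sum, Prod.snd_sum]

lemma aux_weight_fst (s : (Fin (m+1) ⊕ Fin (n+1)) →₀ ℕ) :
    0 ≤ (Finsupp.weight (biwt m n) s).1 := by
  rw [Finsupp.weight_apply, Finsupp.sum_fintype _ _ (by simp)]
  simp only [biwt, Fintype.sum_sum_type, Prod.fst_add, Prod.fst_sum]
  simp
  positivity

instance aux_fin (I : Ideal (BiRing K m n)) (d : ℤ × ℤ) :
    Module.Finite K (degPieceB K I d) := by
  have : Module.Finite K (weightedHomogeneousSubmodule K (biwt m n) d) := by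
    have hfin : {s : (Fin (m+1) ⊕ Fin (n+1)) →₀ ℕ | Finsupp.weight (biwt m n) s = d}.Finite := by
      refine (Finsupp.finite_of_degree_le (d.1 + d.2).toNat).subset ?_
      intro s hs
      have := aux_weight (m := m) (n := n) s
      rw [Set.mem_setOf_eq] at hs
      rw [hs] at this
      simp only [Set.mem_setOf_eq]
      omega
    have := hfin.to_subtype
    rw [weightedHomogeneousSubmodule_eq_finsupp_supported]
    exact Module.Finite.of_basis (basisRestrictSupport K {s | Finsupp.weight (biwt m n) s = d})
  unfold degPieceB
  infer_instance

/-- A form of positive degree in direction `e` is a combination of variables of degree `e`. -/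
lemma aux_split (π : ℤ × ℤ →+ ℤ) (e : ℤ × ℤ)
    (hπ : ∀ v, π (biwt m n v) ≠ 0 → biwt m n v = e)
    (B : BiRing K m n) (c : ℤ × ℤ) (hB : IsBihom K B c) (hc : π c ≠ 0) :
    B ∈ Submodule.span K {G : BiRing K m n | ∃ v G', biwt m n v = e ∧
      IsBihom K G' (c - e) ∧ G = X v * G'} := by
  rw [B.as_sum]
  refine Submodule.sum_mem _ fun s hs => Submodule.subset_span ?_
  have hw : Finsupp.weight (biwt m n) s = c := hB (mem_support_iff.mp hs)
  obtain ⟨v, hv, hv'⟩ : ∃ v, s v ≠ 0 ∧ π (biwt m n v) ≠ 0 := by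
    by_contra! hcon
    apply hc
    rw [← hw, Finsupp.weight_apply, Finsupp.sum, map_sum]
    refine Finset.sum_eq_zero fun v hv => ?_
    rw [map_nsmul, hcon v (Finsupp.mem_support_iff.mp hv), smul_zero]
  have hs' : Finsupp.single v 1 + (s - Finsupp.single v 1) = s := by
    apply add_tsub_cancel_of_le
    rw [Finsupp.single_le_iff]; omega
  refine ⟨v, monomial (s - Finsupp.single v 1) (coeff s B), hπ v hv', ?_, ?_⟩
  · apply isWeightedHomogeneous_monomial
    rw [← hπ v hv', eq_sub_iff_add_eq, ← hw]
    conv_rhs => rw [← hs']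
    rw [map_add, Finsupp.weight_single, one_smul, add_comm]
  · rw [X, monomial_mul, one_mul, hs']

lemma aux_mem_degPiece (I : Ideal (BiRing K m n)) (F : BiRing K m n) (d : ℤ × ℤ)
    (hF : IsBihom K F d) : Ideal.Quotient.mk I F ∈ degPieceB K I d :=
  ⟨F, hF, rfl⟩

/-- The main argument, in a fixed direction `e`. -/
lemma aux_main (s : Set (BiRing K m n)) (hs : ∀ F ∈ s, ∃ d, IsBihom K F d)
    (I : Ideal (BiRing K m n)) (hI : I = Ideal.span s)
    (π : ℤ × ℤ →+ ℤ) (e : ℤ × ℤ) (hπe : π e = 1)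
    (hπ : ∀ v, π (biwt m n v) ≠ 0 → biwt m n v = e)
    (v₀ : Fin (m+1) ⊕ Fin (n+1)) (hv₀ : biwt m n v₀ = e)
    (hreg : ∀ d, ∀ z ∈ degPieceB K I d, Ideal.Quotient.mk I (X v₀) * z = 0 → z = 0)
    (J : Ideal (BiRing K m n ⧸ I)) {t : ℕ} (f : Fin t → BiRing K m n) (dk : Fin t → ℤ × ℤ)
    (hf : ∀ k, IsBihom K (f k) (dk k))
    (hJ : Ideal.span (Set.range fun k => Ideal.Quotient.mk I (f k)) = J)
    (d : ℤ × ℤ) (hd : ∀ k, π (dk k) ≤ π d)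
    (heq : HFIdealB K I J d = HFIdealB K I J (d + e)) :
    HFIdealB K I J d = HFIdealB K I J (d + e + e) := by
  set P : ℤ × ℤ → Submodule K (BiRing K m n ⧸ I) :=
    fun d => (Submodule.restrictScalars K J) ⊓ degPieceB K I d with hP
  have hfinP : ∀ d, Module.Finite K (P d) := fun d =>
    Submodule.finiteDimensional_of_le (inf_le_right : P d ≤ degPieceB K I d)
  set x : BiRing K m n ⧸ I := Ideal.Quotient.mk I (X v₀) with hx
  let μ : (BiRing K m n ⧸ I) →ₗ[K] (BiRing K m n ⧸ I) := LinearMap.mulLeft K x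
  have hXP : ∀ v, biwt m n v = e → ∀ d, ∀ z ∈ P d,
      Ideal.Quotient.mk I (X v) * z ∈ P (d + e) := by
    rintro v hv d z ⟨hzJ, F, hF, rfl⟩
    refine ⟨J.mul_mem_left _ hzJ, X v * F, ?_, map_mul (Ideal.Quotient.mk I) _ _⟩
    have := (isWeightedHomogeneous_X K (biwt m n) v).mul hF
    rw [hv, add_comm e d] at this
    exact this
  have hmap : ∀ d, (P d).map μ ≤ P (d + e) := by
    rintro d _ ⟨z, hz, rfl⟩
    exact hXP v₀ hv₀ d z hz
  have hrank : ∀ d, Module.finrank K ((P d).map μ) = Module.finrank K (P d) := by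
    intro d
    rw [← LinearMap.range_domRestrict]
    apply LinearMap.finrank_range_of_inj
    rw [← LinearMap.ker_eq_bot, LinearMap.ker_eq_bot']
    rintro ⟨z, hz⟩ h0
    exact Subtype.ext (hreg d z hz.2 h0)
  have heq' : (P d).map μ = P (d + e) := by
    haveI := hfinP (d + e)
    exact Submodule.eq_of_le_of_finrank_eq (hmap d) ((hrank d).trans heq)
  have key : P (d + e + e) ≤ (P (d + e)).map μ := by
    rintro _ ⟨hzJ, F, hF, rfl⟩
    have hzJ' : Ideal.Quotient.mk I F ∈ J := hzJ
    change Ideal.Quotient.mk I F ∈ _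
    rw [← hJ, Ideal.mem_span_range_iff_exists_fun] at hzJ'
    obtain ⟨a, ha⟩ := hzJ'
    choose A hA using fun k => Ideal.Quotient.mk_surjective (a k)
    have h1 : F - ∑ k, A k * f k ∈ I := by
      rw [← Ideal.Quotient.mk_eq_mk_iff_sub_mem, ← ha, map_sum]
      simp [hA]
    have h2 := aux_comp_mem s hs _ (hI ▸ h1) (d + e + e)
    rw [← hI, map_sub, IsWeightedHomogeneous.weightedHomogeneousComponent_same hF, map_sum,
      ← Ideal.Quotient.mk_eq_mk_iff_sub_mem, map_sum] at h2
    rw [h2]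
    refine Submodule.sum_mem _ fun k _ => ?_
    rw [aux_comp_mul _ _ _ _ (hf k)]
    set c := d + e + e - dk k with hc
    have hcpos : π c ≠ 0 := by
      have := hd k
      rw [hc, map_sub, map_add, map_add, hπe]
      omega
    have hB := aux_split π e hπ _ c
      (weightedHomogeneousComponent_isWeightedHomogeneous (w := biwt m n) c (A k)) hcpos
    generalize weightedHomogeneousComponent (biwt m n) c (A k) = B at hB
    induction hB using Submodule.span_induction with
    | zero => simp
    | add p q _ _ hp hq => rw [add_mul, map_add]; exact Submodule.add_mem _ hp hq
    | smul r p _ hp =>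
      rw [smul_mul_assoc]
      exact Submodule.smul_mem _ r hp
    | mem G hG =>
      obtain ⟨v, G', hv, hG', rfl⟩ := hG
      have hmem : Ideal.Quotient.mk I (G' * f k) ∈ P (d + e) := by
        refine ⟨?_, aux_mem_degPiece _ _ _ ?_⟩
        · change Ideal.Quotient.mk I (G' * f k) ∈ J
          rw [map_mul, ← hJ]
          exact Ideal.mul_mem_left _ _ (Ideal.subset_span ⟨k, rfl⟩)
        · have := IsWeightedHomogeneous.mul hG' (hf k)
          have e1 : c - e + dk k = d + e := by rw [hc]; abel
          rw [e1] at this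
          exact this
      rw [← heq'] at hmem
      obtain ⟨u, hu, hu'⟩ := hmem
      refine ⟨Ideal.Quotient.mk I (X v) * u, hXP v hv d u hu, ?_⟩
      rw [mul_assoc, map_mul (Ideal.Quotient.mk I), ← hu']
      simp only [μ, LinearMap.mulLeft_apply]
      ring
  have h3 : (P (d + e)).map μ = P (d + e + e) := le_antisymm (hmap _) key
  calc HFIdealB K I J d = HFIdealB K I J (d + e) := heq
    _ = Module.finrank K ((P (d + e)).map μ) := (hrank _).symm
    _ = HFIdealB K I J (d + e + e) := by rw [h3]; rfl

lemma aux_y_reg (s : Set (BiRing K m n)) (hs : ∀ F ∈ s, ∃ d, IsBihom K F d)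
    (I : Ideal (BiRing K m n)) (hI : I = Ideal.span s)
    (hACM : RegPair (x0B K I) (y0B K I))
    (d : ℤ × ℤ) (z : BiRing K m n ⧸ I) (hz : z ∈ degPieceB K I d)
    (h0 : y0B K I * z = 0) : z = 0 := by
  have hk : ∀ k : ℕ, ∃ u, z = x0B K I ^ k * u ∧ y0B K I * u = 0 := by
    intro k
    induction k with
    | zero => exact ⟨z, by simp, h0⟩
    | succ k ih =>
      obtain ⟨u, hu, hu0⟩ := ih
      have := hACM.2 u (by rw [hu0]; exact Ideal.zero_mem _)
      obtain ⟨w, rfl⟩ := Ideal.mem_span_singleton'.mp this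
      refine ⟨w, by rw [hu]; ring, hACM.1 _ ?_⟩
      rw [← hu0]; ring
  obtain ⟨F, hF, rfl⟩ := hz
  obtain ⟨u, hu, -⟩ := hk (d.1 + 1).toNat
  obtain ⟨U, rfl⟩ := Ideal.Quotient.mk_surjective u
  change Ideal.Quotient.mk I F = _ at hu
  change Ideal.Quotient.mk I F = _
  rw [x0B, ← map_pow, ← map_mul, Ideal.Quotient.mk_eq_mk_iff_sub_mem] at hu
  have h2 := aux_comp_mem s hs _ (hI ▸ hu) d
  have hX := (isWeightedHomogeneous_X K (biwt m n) (Sum.inl 0)).pow (d.1 + 1).toNat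
  rw [← hI, map_sub, IsWeightedHomogeneous.weightedHomogeneousComponent_same hF, mul_comm,
    aux_comp_mul _ _ _ _ hX, weightedHomogeneousComponent_eq_zero', zero_mul, sub_zero] at h2
  · exact Ideal.Quotient.eq_zero_iff_mem.mpr h2
  · intro t _ ht
    have h3 := aux_weight_fst (m := m) (n := n) t
    rw [ht] at h3
    simp [biwt] at h3

end Aux

end MultiProjPoints

open MultiProjPoints in
/-- Lemma 3.5: stabilization of the Hilbert function of the
Kähler different `ϑ_𝕏` beyond the maximal degrees `i_max`, `j_max` of a
bihomogeneous minimal system of generators of `ϑ_𝕏`. -/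
theorem statement_8 (K : Type) [Field K] [CharZero K] [DecidableEq K]
    (m n : ℕ) (𝕏 : Finset (BiPt K m n)) (hgood : GoodConfig K 𝕏)
    (hne : 𝕏.Nonempty) (hACM : ACMxy K 𝕏)
    -- a bihomogeneous system of generators of `I_𝕏`
    (r : ℕ) (H : Fin r → BiRing K m n) (hHhom : ∀ k, ∃ d, IsBihom K (H k) d)
    (hHgen : Ideal.span (Set.range H) = vIdealB K 𝕏)
    -- a bihomogeneous minimal system of generators `h_1,…,h_t` of `ϑ_𝕏`
    (t : ℕ) (h : Fin t → BiRing K m n ⧸ vIdealB K 𝕏) (dk : Fin t → ℕ × ℕ)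
    (hhom : ∀ k, ∃ f : BiRing K m n,
      IsBihom K f (((dk k).1 : ℤ), ((dk k).2 : ℤ)) ∧
      Ideal.Quotient.mk (vIdealB K 𝕏) f = h k)
    (hgen : Ideal.span (Set.range h) = kdiffB K (vIdealB K 𝕏) H)
    (hmin : ∀ k, h k ∉ Ideal.span (Set.range h \ {h k}))
    (imax jmax : ℕ) (himax : imax = Finset.univ.sup fun k => (dk k).1)
    (hjmax : jmax = Finset.univ.sup fun k => (dk k).2) :
    ∀ i j : ℕ,
      (imax ≤ i →
        HFIdealB K (vIdealB K 𝕏) (kdiffB K (vIdealB K 𝕏) H) ((i : ℤ), (j : ℤ)) =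
          HFIdealB K (vIdealB K 𝕏) (kdiffB K (vIdealB K 𝕏) H) ((i : ℤ) + 1, (j : ℤ)) →
        HFIdealB K (vIdealB K 𝕏) (kdiffB K (vIdealB K 𝕏) H) ((i : ℤ), (j : ℤ)) =
          HFIdealB K (vIdealB K 𝕏) (kdiffB K (vIdealB K 𝕏) H) ((i : ℤ) + 2, (j : ℤ))) ∧
      (jmax ≤ j →
        HFIdealB K (vIdealB K 𝕏) (kdiffB K (vIdealB K 𝕏) H) ((i : ℤ), (j : ℤ)) =
          HFIdealB K (vIdealB K 𝕏) (kdiffB K (vIdealB K 𝕏) H) ((i : ℤ), (j : ℤ) + 1) →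
        HFIdealB K (vIdealB K 𝕏) (kdiffB K (vIdealB K 𝕏) H) ((i : ℤ), (j : ℤ)) =
          HFIdealB K (vIdealB K 𝕏) (kdiffB K (vIdealB K 𝕏) H) ((i : ℤ), (j : ℤ) + 2)) := by
  intro i j
  choose f hf hfh using hhom
  have hs : ∀ F ∈ {F : BiRing K m n | (∃ d, IsBihom K F d) ∧ ∀ p ∈ 𝕏, evalB K p F = 0},
      ∃ d, IsBihom K F d := fun F hF => hF.1
  have hJ : Ideal.span (Set.range fun k => Ideal.Quotient.mk (vIdealB K 𝕏) (f k)) =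
      kdiffB K (vIdealB K 𝕏) H := by
    rw [← hgen]
    congr 2
    funext k
    exact hfh k
  constructor
  · intro hi heq
    have hd : ∀ k, (dk k).1 ≤ i := fun k =>
      (Finset.le_sup (f := fun k => (dk k).1) (Finset.mem_univ k)).trans (himax ▸ hi)
    have := aux_main _ hs (vIdealB K 𝕏) rfl (AddMonoidHom.fst ℤ ℤ) (1, 0) rfl
      (by rintro (v | v) hv <;> simp_all [biwt]) (Sum.inl 0) rfl
      (fun d z _ h0 => hACM.1 z h0) _ f _ hf hJ ((i : ℤ), (j : ℤ))
      (fun k => by simpa using hd k) (by simpa using heq)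
    simpa [add_assoc] using this
  · intro hj heq
    have hd : ∀ k, (dk k).2 ≤ j := fun k =>
      (Finset.le_sup (f := fun k => (dk k).2) (Finset.mem_univ k)).trans (hjmax ▸ hj)
    have := aux_main _ hs (vIdealB K 𝕏) rfl (AddMonoidHom.snd ℤ ℤ) (0, 1) rfl
      (by rintro (v | v) hv <;> simp_all [biwt]) (Sum.inr 0) rfl
      (fun d z hz h0 => aux_y_reg _ hs _ rfl hACM d z hz h0) _ f _ hf hJ ((i : ℤ), (j : ℤ))
      (fun k => by simpa using hd k) (by simpa using heq)
    simpa [add_assoc] using this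
end
end
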